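/- arXiv:1909.10683 — 7 statements merged into one kernel-verified Lean document; each statement's English description precedes it below -/
import Mathlib

section
/- Let ε ∈ (0,1) be a real such that s := ε⁻⁴ is an integer. There exists n₀ (depending on ε) such that for every n ≥ n₀ the following holds: for every binary string v and all reals δ, γ ≥ 0 with γ + 2δ ≤ 1 − ε, the number of integers k ≥ 0 with s^k < n for which there exists a common subsequence u of v and the Bukh–Ma codeword A_{s^k, n} satisfying n − |u| ≤ δn and |v| − |u| ≤ γn is at most 1200/ε³. (That is, the Bukh–Ma code C_{n,ε} = { A_{r,n} : r = s^k, k < log_s n } is list-decodable from δn deletions and γn insertions with list size at most 1200/ε³.) -/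
/-- The prefix of length `l` of the infinite alternating binary string `(0^r 1^r)^∞`. -/
def bukhMa (r l : ℕ) : List Bool :=
  (List.range l).map (fun t => decide ((t / r) % 2 = 1))

namespace BM

/-- signs -/
def sg (b : Bool) : ℝ := if b then -1 else 1

/-- signed sum -/
noncomputable def S (w : List Bool) : ℝ := (w.map sg).sum

/-- energy of one piece -/
noncomputable def E1 (w : List Bool) : ℝ := S w ^ 2 / w.length

/-- energy of a partition -/
noncomputable def E (Q : List (List Bool)) : ℝ := (Q.map E1).sum

/-- alternating full runs -/
def alt (r : ℕ) : Bool → ℕ → List Bool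
  | _, 0 => []
  | a, k + 1 => List.replicate r a ++ alt r (!a) k

/-- segment of the alternating string -/
def seg (r off l : ℕ) : List Bool :=
  (List.range' off l).map (fun t => decide ((t / r) % 2 = 1))

theorem S_append (a b : List Bool) : S (a ++ b) = S a + S b := by simp [S]

theorem S_count (a : Bool) (w : List Bool) : sg a * S w = 2 * (w.count a : ℝ) - w.length := by
  induction w with
  | nil => simp [S]
  | cons x w ih =>
    have h : S (x :: w) = sg x + S w := by simp [S]
    rw [h, mul_add, ih]
    cases a <;> cases x <;> simp [sg] <;> ring

theorem abs_S_le (w : List Bool) : |S w| ≤ w.length := by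
  have h1 := S_count false w
  have h2 : (w.count false : ℝ) ≤ w.length := by exact_mod_cast List.count_le_length
  have h3 : (0 : ℝ) ≤ w.count false := by positivity
  simp [sg] at h1
  rw [abs_le]; constructor <;> linarith

theorem E1_le (w : List Bool) : E1 w ≤ w.length := by
  unfold E1
  apply div_le_of_le_mul₀ (by positivity) (by positivity)
  have := abs_S_le w
  rw [← sq_abs]
  nlinarith [abs_nonneg (S w)]

theorem E_le (Q : List (List Bool)) : E Q ≤ Q.flatten.length := by
  induction Q with
  | nil => simp [E]
  | cons w Q ih =>
    have := E1_le w
    simp [E] at ih ⊢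
    linarith

theorem E1_nonneg (w : List Bool) : 0 ≤ E1 w := by unfold E1; positivity

/-- the odd majorant -/
noncomputable def psi (b : ℝ) : ℝ := 2 * b / (1 + |b|)

theorem psi_neg (b : ℝ) : psi (-b) = - psi b := by simp [psi, neg_div]

theorem psi_le_one (b : ℝ) (h : |b| ≤ 1) : psi b ≤ 1 := by
  unfold psi
  rw [div_le_one (by positivity)]
  have := le_abs_self b
  linarith

theorem block_aux (r l q b : ℝ) (hl : 0 ≤ l) (hb : |b| ≤ 1) (hqr : q ≤ r) (h0 : 0 ≤ r)
    (hq : q ≤ (1 + b) / 2 * l) : 3 * q ≤ l + r + r * psi b := by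
  have hb' := abs_le.mp hb
  unfold psi
  by_cases h : 0 ≤ b
  · rw [abs_of_nonneg h]
    have h1 : 0 < 1 + b := by linarith
    have e : l + r + r * (2 * b / (1 + b)) - 3 * q
        = (2 * ((1 + b) / 2 * l - q) + (1 + 3 * b) * (r - q)) / (1 + b) := by
      field_simp; ring
    have : 0 ≤ l + r + r * (2 * b / (1 + b)) - 3 * q := by
      rw [e]
      apply div_nonneg _ h1.le
      have : 0 ≤ (1 + 3 * b) * (r - q) := mul_nonneg (by linarith) (by linarith)
      linarith
    linarith
  · push Not at h
    rw [abs_of_neg h]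
    have h1 : 0 < 1 + -b := by linarith
    have e : l + r + r * (2 * b / (1 + -b)) - 3 * q
        = (l * (1 - b) + r * (1 + b) - 3 * q * (1 - b)) / (1 + -b) := by
      field_simp; ring
    have : 0 ≤ l + r + r * (2 * b / (1 + -b)) - 3 * q := by
      rw [e]
      apply div_nonneg _ h1.le
      have h2 : q * (1 + b) ≤ r * (1 + b) := mul_le_mul_of_nonneg_right hqr (by linarith)
      by_cases hq0 : q ≤ 0
      · nlinarith
      · push Not at hq0
        have h3 : 0 < 1 + b := by
          by_contra hc
          have : b = -1 := by linarith
          subst this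
          norm_num at hq
          linarith
        have h4 : 0 ≤ (1 - b) * ((1 + b) / 2 * l - q) := mul_nonneg (by linarith) (by linarith)
        -- multiply by (1+b)/2
        have h5 : 0 ≤ (1 + b) * (l * (1 - b) + q * (1 + b) - 3 * q * (1 - b)) := by
          have : 0 ≤ q * (b ^ 2) := by positivity
          nlinarith
        have h6 := nonneg_of_mul_nonneg_right h5 h3
        linarith
    linarith

theorem block (r : ℕ) (a : Bool) (u w : List Bool) (b : ℝ) (hb : |b| ≤ 1)
    (h1 : u.Sublist w) (h2 : u.Sublist (List.replicate r a)) :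
    3 * (u.length : ℝ) ≤ w.length + r + r * psi (sg a * b) + 3 / 2 * |S w - b * w.length| := by
  obtain ⟨m, hm, rfl⟩ := List.sublist_replicate_iff.mp h2
  have hc : m ≤ w.count a := by simpa using h1.count_le a
  have hc' : (m : ℝ) ≤ w.count a := by exact_mod_cast hc
  have hm' : (m : ℝ) ≤ r := by exact_mod_cast hm
  have hS := S_count a w
  have habs : sg a * S w - sg a * b * w.length ≤ |S w - b * w.length| := by
    have e : sg a * S w - sg a * b * w.length = sg a * (S w - b * w.length) := by ring
    rw [e]
    cases a
    · simpa [sg] using le_abs_self (S w - b * w.length)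
    · simpa [sg] using neg_le_abs (S w - b * w.length)
  set D := |S w - b * w.length| with hD
  have hD0 : 0 ≤ D := abs_nonneg _
  have hb2 : |sg a * b| ≤ 1 := by cases a <;> simpa [sg] using hb
  have := block_aux r w.length (m - D / 2) (sg a * b) (by positivity) hb2 (by linarith)
    (by positivity) (by linarith)
  simp only [List.length_replicate]
  linarith

theorem amgm (w : List Bool) (b t : ℝ) (ht : 0 < t) :
    |S w - b * w.length| ≤ (t ^ 2 * w.length + E1 w - 2 * b * S w + b ^ 2 * w.length) / (2 * t) := by
  rw [le_div_iff₀ (by positivity)]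
  have habs := abs_S_le w
  unfold E1
  rcases Nat.eq_zero_or_pos w.length with h | h
  · have : w = [] := List.length_eq_zero_iff.mp h
    subst this
    simp [S]
  · have hl : (0 : ℝ) < w.length := by exact_mod_cast h
    generalize (w.length : ℝ) = l at *
    generalize S w = x at *
    have e : t ^ 2 * l + x ^ 2 / l - 2 * b * x + b ^ 2 * l - |x - b * l| * (2 * t)
        = (t * l - |x - b * l|) ^ 2 / l := by
      have : (t * l - |x - b * l|) ^ 2 = t ^ 2 * l ^ 2 - 2 * t * l * |x - b * l| + (x - b * l) ^ 2 := by
        rw [← sq_abs (x - b * l)]; ring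
      rw [this]
      field_simp; ring
    have : 0 ≤ (t * l - |x - b * l|) ^ 2 / l := by positivity
    linarith

theorem alt_bound (r : ℕ) (b t : ℝ) (hb : |b| ≤ 1) (ht : 0 < t) (k : ℕ) :
    ∀ (a : Bool) (u w : List Bool), u.Sublist w → u.Sublist (alt r a k) →
    ∃ P : List (List Bool), P.flatten = w ∧ P.length = k + 1 ∧
      3 * (u.length : ℝ) ≤ w.length + k * r + r * max 0 (psi (sg a * b)) +
        3 / (4 * t) * (t ^ 2 * w.length + E P - 2 * b * S w + b ^ 2 * w.length) := by
  have ht' : (0 : ℝ) < 3 / (4 * t) := by positivity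
  have key : ∀ w : List Bool, 3 / 2 * |S w - b * w.length| ≤
      3 / (4 * t) * (t ^ 2 * w.length + E1 w - 2 * b * S w + b ^ 2 * w.length) := by
    intro w
    have := amgm w b t ht
    calc _ ≤ 3 / 2 * ((t ^ 2 * w.length + E1 w - 2 * b * S w + b ^ 2 * w.length) / (2 * t)) := by
          linarith
      _ = _ := by field_simp; ring
  induction k with
  | zero =>
    intro a u w _ h2
    have : u = [] := by simpa [alt] using h2
    subst this
    refine ⟨[w], by simp, by simp, ?_⟩
    have h3 := key w
    have h4 := abs_nonneg (S w - b * w.length)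
    have h5 : (0 : ℝ) ≤ r * max 0 (psi (sg a * b)) := by positivity
    have h6 : (0 : ℝ) ≤ w.length := by positivity
    have h7 : E [w] = E1 w := by simp [E]
    rw [h7]
    simp only [List.length_nil, Nat.cast_zero, zero_mul, mul_zero, add_zero]
    linarith
  | succ k ih =>
    intro a u w h1 h2
    rw [alt, List.sublist_append_iff] at h2
    obtain ⟨u1, u2, rfl, h3, h4⟩ := h2
    rw [List.append_sublist_iff] at h1
    obtain ⟨w1, w2, rfl, h5, h6⟩ := h1
    obtain ⟨P, hP, hPl, hPb⟩ := ih (!a) u2 w2 h6 h4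
    refine ⟨w1 :: P, by simp [hP], by simp [hPl], ?_⟩
    have hbl := block r a u1 w1 b hb h5 h3
    have hk := key w1
    have hsg : sg (!a) * b = -(sg a * b) := by cases a <;> simp [sg]
    rw [hsg, psi_neg] at hPb
    have hmax : max 0 (psi (sg a * b)) = psi (sg a * b) + max 0 (-psi (sg a * b)) := by
      rw [← max_add_add_left]; simp [max_comm]
    rw [hmax]
    have hE : E (w1 :: P) = E1 w1 + E P := by simp [E]
    rw [hE, S_append]
    push_cast [List.length_append]
    linarith

theorem seg_append (r off l1 l2 : ℕ) : seg r off (l1 + l2) = seg r off l1 ++ seg r (off + l1) l2 := by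
  unfold seg
  rw [← List.map_append, List.range'_append_1]

theorem seg_small (r q l : ℕ) (hr : 0 < r) (hl : l ≤ r) :
    seg r (q * r) l = List.replicate l (decide (q % 2 = 1)) := by
  unfold seg
  rw [List.eq_replicate_iff]
  refine ⟨by simp, ?_⟩
  intro x hx
  simp only [List.mem_map, List.mem_range'_1] at hx
  obtain ⟨y, ⟨hy1, hy2⟩, rfl⟩ := hx
  have : y / r = q := by
    apply Nat.div_eq_of_lt_le
    · linarith
    · rw [Nat.add_mul]; omega
  rw [this]

theorem seg_aligned (r : ℕ) (hr : 0 < r) : ∀ (l q : ℕ), ∃ k, 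
    (seg r (q * r) l).Sublist (alt r (decide (q % 2 = 1)) k) ∧ k * r ≤ l + r := by
  intro l
  induction l using Nat.strong_induction_on with
  | _ l ih =>
    intro q
    by_cases hl : l ≤ r
    · refine ⟨1, ?_, by omega⟩
      rw [seg_small r q l hr hl]
      simp [alt, List.replicate_sublist_replicate, hl]
    · push Not at hl
      obtain ⟨k, hk1, hk2⟩ := ih (l - r) (by omega) (q + 1)
      refine ⟨k + 1, ?_, by rw [Nat.add_mul]; omega⟩
      have e : l = r + (l - r) := by omega
      rw [e, seg_append, seg_small r q r hr le_rfl, alt]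
      apply List.Sublist.append_left
      have e2 : (!decide (q % 2 = 1)) = decide ((q + 1) % 2 = 1) := by
        rw [← decide_not, decide_eq_decide]; omega
      rw [e2]
      rw [Nat.add_mul, one_mul] at hk1
      exact hk1

theorem seg_sub (r : ℕ) (hr : 0 < r) (off l : ℕ) : ∃ a k,
    (seg r off l).Sublist (alt r a k) ∧ k * r ≤ l + 2 * r := by
  obtain ⟨k, hk1, hk2⟩ := seg_aligned r hr (off % r + l) (off / r)
  refine ⟨decide (off / r % 2 = 1), k, ?_, ?_⟩
  · refine List.Sublist.trans ?_ hk1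
    rw [seg_append]
    have : off / r * r + off % r = off := Nat.div_add_mod' off r
    rw [this]
    exact List.sublist_append_right _ _
  · have := Nat.mod_lt off hr
    omega

theorem window (r : ℕ) (hr : 0 < r) (t : ℝ) (ht : 0 < t) (off l : ℕ) (u w : List Bool)
    (h1 : u.Sublist w) (h2 : u.Sublist (seg r off l)) :
    ∃ P : List (List Bool), P.flatten = w ∧ P.length * r ≤ l + 3 * r ∧
      3 * (u.length : ℝ) ≤ w.length + l + 3 * r +
        3 / (4 * t) * (t ^ 2 * w.length + E P - E1 w) := by
  obtain ⟨a, k, hk1, hk2⟩ := seg_sub r hr off l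
  have hS := abs_S_le w
  have hb : |S w / w.length| ≤ 1 := by
    rw [abs_div, abs_of_nonneg (by positivity : (0 : ℝ) ≤ w.length)]
    exact div_le_one_of_le₀ hS (by positivity)
  obtain ⟨P, hP, hPl, hPb⟩ := alt_bound r (S w / w.length) t hb ht k a u w h1 (h2.trans hk1)
  refine ⟨P, hP, ?_, ?_⟩
  · rw [hPl, Nat.add_mul]; omega
  · have e : t ^ 2 * w.length + E P - 2 * (S w / w.length) * S w + (S w / w.length) ^ 2 * w.length
        = t ^ 2 * w.length + E P - E1 w := by
      unfold E1
      rcases eq_or_ne (w.length : ℝ) 0 with h | h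
      · simp [h]
      · field_simp; ring
    rw [e] at hPb
    have hm : max 0 (psi (sg a * (S w / w.length))) ≤ 1 := by
      apply max_le zero_le_one
      apply psi_le_one
      cases a <;> simpa [sg] using hb
    have h3 : (r : ℝ) * max 0 (psi (sg a * (S w / w.length))) ≤ r * 1 :=
      mul_le_mul_of_nonneg_left hm (by positivity)
    have h4 : (k : ℝ) * r ≤ l + 2 * r := by exact_mod_cast hk2
    linarith

theorem step (r : ℕ) (hr : 0 < r) (t : ℝ) (ht : 0 < t) (Q : List (List Bool)) :
    ∀ (off l : ℕ) (u : List Bool), u.Sublist Q.flatten → u.Sublist (seg r off l) →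
    ∃ Q' : List (List Bool), Q'.flatten = Q.flatten ∧ Q'.length * r ≤ l + 3 * r * Q.length ∧
      3 * (u.length : ℝ) ≤ Q.flatten.length + l + 3 * r * Q.length +
        3 / (4 * t) * (t ^ 2 * Q.flatten.length + E Q' - E Q) := by
  induction Q with
  | nil =>
    intro off l u h1 _
    have : u = [] := by simpa using h1
    subst this
    exact ⟨[], by simp, by simp, by simp⟩
  | cons w Q ih =>
    intro off l u h1 h2
    rw [List.flatten_cons, List.sublist_append_iff] at h1
    obtain ⟨u1, u2, rfl, h3, h4⟩ := h1
    rw [List.append_sublist_iff] at h2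
    obtain ⟨A1, A2, hA, h5, h6⟩ := h2
    have hlen : l = A1.length + A2.length := by
      have := congrArg List.length hA
      simpa [seg] using this
    have hA' := hA
    rw [hlen, seg_append] at hA'
    obtain ⟨e1, e2⟩ := List.append_inj hA' (by simp [seg])
    rw [← e1] at h5
    rw [← e2] at h6
    obtain ⟨P, hP, hPl, hPb⟩ := window r hr t ht _ _ u1 w h3 h5
    obtain ⟨Q', hQ, hQl, hQb⟩ := ih _ _ u2 h4 h6
    refine ⟨P ++ Q', by simp [hP, hQ], ?_, ?_⟩
    · simp only [List.length_append, List.length_cons]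
      rw [hlen]
      nlinarith
    · have hE : E (P ++ Q') = E P + E Q' := by simp [E]
      have hE2 : E (w :: Q) = E1 w + E Q := by simp [E]
      rw [hE, hE2, hlen]
      push_cast [List.length_append, List.flatten_cons, List.length_cons]
      linarith

theorem chain (ε : ℝ) (hε0 : 0 < ε) (hε1 : ε < 1) (s : ℕ) (hs2 : 2 ≤ s) (hsε : 1 ≤ ε * s)
    (n : ℕ) (v : List Bool) (hv : (v.length : ℝ) ≤ 2 * n) (M : ℕ)
    (hM : s ^ M ≤ s * n) (K : Finset ℕ) (hKM : ∀ k ∈ K, k < M)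
    (hK : ∀ k ∈ K, ∃ u : List Bool, u.Sublist v ∧ u.Sublist (bukhMa (s ^ k) n) ∧
      v.length + n + ε * n ≤ 3 * u.length) :
    ∀ j m : ℕ, m + j = M → ∃ Q : List (List Bool), Q.flatten = v ∧
      Q.length * s ^ m ≤ 2 * s * n ∧
      ε ^ 2 * n / 9 * (((K.filter (fun k => m ≤ k)).card : ℝ) / 7 - 1) ≤ E Q := by
  intro j
  induction j using Nat.strong_induction_on with
  | _ j ih =>
    intro m hm
    by_cases hj : j < 7
    · refine ⟨[v], by simp, ?_, ?_⟩
      · have : s ^ m ≤ s ^ M := Nat.pow_le_pow_right (by omega) (by omega)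
        simp only [List.length_singleton]
        nlinarith
      · have hc : (K.filter (fun k => m ≤ k)).card ≤ 7 := by
          have : K.filter (fun k => m ≤ k) ⊆ Finset.Ico m (m + 7) := by
            intro k hk
            simp only [Finset.mem_filter] at hk
            have := hKM k hk.1
            simp; omega
          simpa using Finset.card_le_card this
        have hc' : ((K.filter (fun k => m ≤ k)).card : ℝ) ≤ 7 := by exact_mod_cast hc
        have h1 : E [v] = E1 v := by simp [E]
        rw [h1]
        refine le_trans ?_ (E1_nonneg v)
        apply mul_nonpos_of_nonneg_of_nonpos (by positivity) (by linarith)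
    · push Not at hj
      by_cases hmK : m ∈ K
      · obtain ⟨Q, hQ, hQl, hQE⟩ := ih (j - 7) (by omega) (m + 7) (by omega)
        obtain ⟨u, hu1, hu2, hu3⟩ := hK m hmK
        have hr : 0 < s ^ m := by positivity
        have hu2' : u.Sublist (seg (s ^ m) 0 n) := by
          rw [bukhMa, List.range_eq_range'] at hu2
          exact hu2
        obtain ⟨Q', hQ', hQl', hb⟩ := step (s ^ m) hr (ε / 3) (by positivity) Q 0 n u
          (by rw [hQ]; exact hu1) hu2'
        rw [hQ] at hb
        -- size of the old partition at the new scale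
        have hsmall : (Q.length : ℝ) * (s : ℝ) ^ m ≤ ε * n / 12 := by
          have h1 : (Q.length : ℝ) * (s : ℝ) ^ (m + 7) ≤ 2 * s * n := by exact_mod_cast hQl
          have hsR : (2 : ℝ) ≤ s := by exact_mod_cast hs2
          have h2 : (32 : ℝ) ≤ (s : ℝ) ^ 5 := by
            calc (32 : ℝ) = 2 ^ 5 := by norm_num
              _ ≤ _ := by gcongr
          have h3 : 24 ≤ ε * (s : ℝ) ^ 6 := by
            have : ε * (s : ℝ) ^ 6 = (ε * s) * (s : ℝ) ^ 5 := by ring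
            rw [this]; nlinarith
          have h4 : ((Q.length : ℝ) * (s : ℝ) ^ m * (s : ℝ) ^ 6) * s ≤ (2 * n) * s := by
            calc _ = (Q.length : ℝ) * (s : ℝ) ^ (m + 7) := by ring
              _ ≤ 2 * s * n := h1
              _ = _ := by ring
          have h5 := le_of_mul_le_mul_right h4 (by linarith)
          have hx : 0 ≤ (Q.length : ℝ) * (s : ℝ) ^ m := by positivity
          generalize (Q.length : ℝ) * (s : ℝ) ^ m = x at *
          have h6 : x * 24 ≤ x * (ε * (s : ℝ) ^ 6) := mul_le_mul_of_nonneg_left h3 hx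
          have h7 : ε * (x * (s : ℝ) ^ 6) ≤ ε * (2 * n) := mul_le_mul_of_nonneg_left h5 hε0.le
          linarith
        refine ⟨Q', by rw [hQ', hQ], ?_, ?_⟩
        · have h1 : (Q'.length : ℝ) * (s : ℝ) ^ m ≤ n + 3 * (s : ℝ) ^ m * Q.length := by
            exact_mod_cast hQl'
          have hn : (0 : ℝ) ≤ n := by positivity
          have h2 : (Q'.length : ℝ) * (s : ℝ) ^ m ≤ 2 * n := by nlinarith
          have h3 : Q'.length * s ^ m ≤ 2 * n := by exact_mod_cast h2
          nlinarith
        · have hc : (K.filter (fun k => m ≤ k)).card ≤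
              (K.filter (fun k => m + 7 ≤ k)).card + 7 := by
            have : K.filter (fun k => m ≤ k) ⊆
                K.filter (fun k => m + 7 ≤ k) ∪ Finset.Ico m (m + 7) := by
              intro k hk
              simp only [Finset.mem_filter, Finset.mem_union, Finset.mem_Ico] at hk ⊢
              by_cases h : m + 7 ≤ k
              · exact Or.inl ⟨hk.1, h⟩
              · right; omega
            have h2 := (Finset.card_le_card this).trans (Finset.card_union_le _ _)
            simpa using h2
          have hc' : ((K.filter (fun k => m ≤ k)).card : ℝ) ≤
              (K.filter (fun k => m + 7 ≤ k)).card + 7 := by exact_mod_cast hc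
          have hstep : ε ^ 2 * n / 9 ≤ E Q' - E Q := by
            have e : 3 / (4 * (ε / 3)) * ((ε / 3) ^ 2 * v.length + E Q' - E Q)
                = ε / 4 * v.length + 9 / (4 * ε) * (E Q' - E Q) := by
              field_simp; ring
            rw [e] at hb
            push_cast at hb
            have h1 : ε / 4 * v.length ≤ ε / 4 * (2 * n) :=
              mul_le_mul_of_nonneg_left hv (by positivity)
            have h2 : ε * n / 4 ≤ 9 / (4 * ε) * (E Q' - E Q) := by linarith
            have h3 := mul_le_mul_of_nonneg_left h2 (by positivity : 0 ≤ 4 * ε / 9)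
            have e2 : 4 * ε / 9 * (9 / (4 * ε) * (E Q' - E Q)) = E Q' - E Q := by
              field_simp
            rw [e2] at h3
            linarith
          have hp : 0 ≤ ε ^ 2 * n / 9 := by positivity
          generalize ε ^ 2 * n / 9 = c at *
          have := mul_le_mul_of_nonneg_left hc' hp
          linarith
      · obtain ⟨Q, hQ, hQl, hQE⟩ := ih (j - 1) (by omega) (m + 1) (by omega)
        refine ⟨Q, hQ, ?_, ?_⟩
        · refine le_trans ?_ hQl
          gcongr
          · omega
          · omega
        · have : K.filter (fun k => m ≤ k) = K.filter (fun k => m + 1 ≤ k) := by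
            apply Finset.filter_congr
            intro k hk
            have : k ≠ m := fun h => hmK (h ▸ hk)
            omega
          rw [this]; exact hQE

end BM

theorem stmt5 (ε : ℝ) (hε : ε ∈ Set.Ioo (0 : ℝ) 1) (s : ℕ) (hs : (s : ℝ) = 1 / ε ^ 4) :
    ∃ n₀ : ℕ, ∀ n : ℕ, n₀ ≤ n →
      ∀ v : List Bool, ∀ δ γ : ℝ, 0 ≤ δ → 0 ≤ γ → γ + 2 * δ ≤ 1 - ε →
        (({k : ℕ | s ^ k < n ∧ ∃ u : List Bool, u.Sublist v ∧ u.Sublist (bukhMa (s ^ k) n) ∧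
            (n : ℝ) - u.length ≤ δ * n ∧ (v.length : ℝ) - u.length ≤ γ * n} : Set ℕ).ncard : ℝ)
          ≤ 1200 / ε ^ 3 := by
  obtain ⟨h0, h1⟩ := hε
  refine ⟨1, ?_⟩
  intro n hn v δ γ hδ hγ hsum
  have hnR : (0 : ℝ) < n := by exact_mod_cast hn
  have hsε4 : (s : ℝ) * ε ^ 4 = 1 := by rw [hs]; field_simp
  have he4 : ε ^ 4 < 1 := pow_lt_one₀ h0.le h1 (by norm_num)
  have hs1 : (1 : ℝ) < s := by
    rw [hs, lt_div_iff₀ (by positivity)]; linarith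
  have hs2 : 2 ≤ s := by
    have : 1 < s := by exact_mod_cast hs1
    omega
  have hsε : 1 ≤ ε * s := by
    have : ε ^ 4 ≤ ε := by
      calc ε ^ 4 ≤ ε ^ 1 := pow_le_pow_of_le_one h0.le h1.le (by norm_num)
        _ = ε := by simp
    nlinarith
  set T : Set ℕ := {k : ℕ | s ^ k < n ∧ ∃ u : List Bool, u.Sublist v ∧ u.Sublist (bukhMa (s ^ k) n) ∧
            (n : ℝ) - u.length ≤ δ * n ∧ (v.length : ℝ) - u.length ≤ γ * n} with hT
  have hex : ∃ M, n ≤ s ^ M := ⟨n, (Nat.lt_pow_self (by omega)).le⟩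
  classical
  obtain ⟨M, hM1, hM2⟩ : ∃ M, n ≤ s ^ M ∧ s ^ M ≤ s * n := by
    refine ⟨Nat.find hex, Nat.find_spec hex, ?_⟩
    rcases Nat.eq_zero_or_pos (Nat.find hex) with h | h
    · rw [h]; simp; nlinarith
    · have := Nat.find_min hex (m := Nat.find hex - 1) (by omega)
      push Not at this
      have e : s ^ Nat.find hex = s * s ^ (Nat.find hex - 1) := by
        rw [← pow_succ']; congr 1; omega
      rw [e]
      exact Nat.mul_le_mul_left _ this.le
  have hTM : ∀ k ∈ T, k < M := by
    intro k hk
    have : s ^ k < s ^ M := lt_of_lt_of_le hk.1 hM1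
    exact (Nat.pow_lt_pow_iff_right (by omega)).mp this
  have hfin : T.Finite := (Set.finite_Iio M).subset hTM
  have hpos : (0 : ℝ) < 1200 / ε ^ 3 := by positivity
  by_cases hne : T.Nonempty
  · have hv : (v.length : ℝ) ≤ 2 * n := by
      obtain ⟨k, hk, u, hu1, hu2, hu3, hu4⟩ := hne
      have hl : u.length ≤ n := by simpa [bukhMa] using hu2.length_le
      have hl' : (u.length : ℝ) ≤ n := by exact_mod_cast hl
      have : γ * n ≤ 1 * n := mul_le_mul_of_nonneg_right (by linarith) hnR.le
      linarith
    obtain ⟨Q, hQ, -, hE⟩ := BM.chain ε h0 h1 s hs2 hsε n v hv M hM2 hfin.toFinset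
      (by simpa using hTM) (by
        intro k hk
        rw [Set.Finite.mem_toFinset] at hk
        obtain ⟨_, u, hu1, hu2, hu3, hu4⟩ := hk
        refine ⟨u, hu1, hu2, ?_⟩
        have := mul_le_mul_of_nonneg_right hsum hnR.le
        linarith) M 0 (by omega)
    have hEl := BM.E_le Q
    rw [hQ] at hEl
    have hcard : (hfin.toFinset.filter (fun k => 0 ≤ k)).card = T.ncard := by
      simp [Set.ncard_eq_toFinset_card T hfin]
    rw [hcard] at hE
    generalize (T.ncard : ℝ) = c at *
    have h3 : ε ^ 2 / 9 * (c / 7 - 1) ≤ 2 := by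
      have : (ε ^ 2 / 9 * (c / 7 - 1)) * n ≤ 2 * n := by
        calc _ = ε ^ 2 * n / 9 * (c / 7 - 1) := by ring
          _ ≤ 2 * n := by linarith
      exact le_of_mul_le_mul_right this hnR
    have h4 : c * ε ^ 2 ≤ 126 + 7 * ε ^ 2 := by linarith
    rw [le_div_iff₀ (by positivity)]
    have h5 : ε ^ 2 ≤ 1 := pow_le_one₀ h0.le h1.le
    have h6 : c * ε ^ 3 = (c * ε ^ 2) * ε := by ring
    rw [h6]
    have h7 : c * ε ^ 2 ≤ 133 := by linarith
    nlinarith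
  · rw [Set.not_nonempty_iff_eq_empty] at hne
    rw [hne]
    simp only [Set.ncard_empty, Nat.cast_zero]
    exact hpos.le
end

section
/- There is an absolute constant c > 0 such that the following holds. Let q ≥ 2 be an integer and let ε ∈ (0,1) be a real such that s := ε⁻⁴ is an integer. There exists n₀ (depending on ε and q) such that for every n ≥ n₀ the following holds: for every string v over Fin q, every integer z with 1 ≤ z ≤ q−1, and all reals δ, γ ≥ 0 with γ + 2zδ ≤ (1−ε)·((2q−1)z − z²)/q, the number of integers k ≥ 0 with s^k < n for which there exists a common subsequence u of v and the q-ary Bukh–Ma codeword A^q_{s^k, n} satisfying n − |u| ≤ δn and |v| − |u| ≤ γn is at most c·q⁵/ε². -/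
/-- The prefix of length `l` of the infinite `q`-ary string `(1^r 2^r ⋯ q^r)^∞`
(realized over `Fin q`). -/
def bukhMaQ (q r l : ℕ) : List (Fin q) :=
  if h : 0 < q then (List.range l).map (fun t => ⟨(t / r) % q, Nat.mod_lt _ h⟩) else []


noncomputable def bavg (H L : ℕ) (f : ℕ → ℝ) (x : ℕ) : ℝ :=
  (∑ y ∈ (Finset.range H).filter (fun y => y / L = x / L), f y) / L

theorem fib_iff (L x y : ℕ) (hL : 0 < L) :
    y / L = x / L ↔ L * (x / L) ≤ y ∧ y < L * (x / L) + L := by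
  rw [Nat.div_eq_iff hL]
  rw [mul_comm L]
  constructor
  · rintro ⟨h1, h2⟩; omega
  · rintro ⟨h1, h2⟩; omega

theorem card_fib_le (H L x : ℕ) (hL : 0 < L) :
    ((Finset.range H).filter (fun y => y / L = x / L)).card ≤ L := by
  have : (Finset.range H).filter (fun y => y / L = x / L) ⊆
      Finset.Ico (L * (x / L)) (L * (x / L) + L) := by
    intro y hy
    rw [Finset.mem_filter, fib_iff L x y hL] at hy
    exact Finset.mem_Ico.2 hy.2
  simpa using Finset.card_le_card this

theorem card_fib_eq (H L x : ℕ) (hL : 0 < L) (hd : L ∣ H) (hx : x < H) :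
    ((Finset.range H).filter (fun y => y / L = x / L)).card = L := by
  have : (Finset.range H).filter (fun y => y / L = x / L) =
      Finset.Ico (L * (x / L)) (L * (x / L) + L) := by
    ext y
    rw [Finset.mem_filter, fib_iff L x y hL, Finset.mem_Ico, Finset.mem_range]
    refine ⟨fun h => h.2, fun h => ⟨?_, h⟩⟩
    obtain ⟨c, rfl⟩ := hd
    have h1 : x / L < c := Nat.div_lt_of_lt_mul hx
    have h2 : L * (x / L) + L ≤ L * c := by
      calc L * (x / L) + L = L * (x / L + 1) := by ring
        _ ≤ L * c := Nat.mul_le_mul_left _ h1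
    omega
  rw [this]; simp

theorem bavg_adj (H L : ℕ) (hL : 0 < L) (hd : L ∣ H) (f h : ℕ → ℝ)
    (hh : ∀ x y, x / L = y / L → h x = h y) :
    ∑ x ∈ Finset.range H, h x * bavg H L f x = ∑ x ∈ Finset.range H, h x * f x := by
  have hL' : (L : ℝ) ≠ 0 := by positivity
  calc ∑ x ∈ Finset.range H, h x * bavg H L f x
      = ∑ x ∈ Finset.range H, ∑ y ∈ Finset.range H,
          (if y / L = x / L then h y * f y / L else 0) := by
        refine Finset.sum_congr rfl fun x _ => ?_
        rw [bavg, mul_div_assoc', Finset.mul_sum, Finset.sum_div, Finset.sum_filter]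
        refine Finset.sum_congr rfl fun y _ => ?_
        split_ifs with hxy
        · rw [hh y x hxy]
        · rfl
    _ = ∑ y ∈ Finset.range H, ∑ x ∈ Finset.range H,
          (if y / L = x / L then h y * f y / L else 0) := Finset.sum_comm
    _ = _ := by
        refine Finset.sum_congr rfl fun y hy => ?_
        rw [← Finset.sum_filter, Finset.sum_const]
        have := card_fib_eq H L y hL hd (Finset.mem_range.1 hy)
        have h2 : (Finset.range H).filter (fun x => y / L = x / L) =
          (Finset.range H).filter (fun x => x / L = y / L) := by
          ext x; simp [eq_comm]
        rw [h2, this, nsmul_eq_mul]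
        field_simp

theorem bavg_const (H L : ℕ) (f : ℕ → ℝ) (x y : ℕ) (h : x / L = y / L) :
    bavg H L f x = bavg H L f y := by
  rw [bavg, bavg, h]

theorem div_coarse (L L' x y : ℕ) (hd : L ∣ L') (h : x / L = y / L) : x / L' = y / L' := by
  obtain ⟨c, rfl⟩ := hd
  rw [← Nat.div_div_eq_div_mul, ← Nat.div_div_eq_div_mul, h]

theorem bavg_nonneg (H L : ℕ) (f : ℕ → ℝ) (hf : ∀ x, 0 ≤ f x) (x : ℕ) : 0 ≤ bavg H L f x :=
  div_nonneg (Finset.sum_nonneg fun y _ => hf y) (Nat.cast_nonneg _)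

theorem bavg_le_one (H L : ℕ) (hL : 0 < L) (f : ℕ → ℝ) (hf : ∀ x, f x ≤ 1) (x : ℕ) :
    bavg H L f x ≤ 1 := by
  rw [bavg, div_le_one (by positivity)]
  calc _ ≤ ∑ y ∈ (Finset.range H).filter (fun y => y / L = x / L), (1 : ℝ) :=
        Finset.sum_le_sum fun y _ => hf y
    _ ≤ L := by
        rw [Finset.sum_const, nsmul_eq_mul, mul_one]
        exact_mod_cast card_fib_le H L x hL

theorem bavg_sum (H L q : ℕ) (f : ℕ → ℕ → ℝ) (x : ℕ) :
    ∑ a ∈ Finset.range q, bavg H L (f a) x = bavg H L (fun y => ∑ a ∈ Finset.range q, f a y) x := by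
  simp only [bavg]
  rw [← Finset.sum_div, Finset.sum_comm]

theorem bavg_energy (H L L' : ℕ) (hL' : 0 < L') (hLL : L ∣ L') (hd : L' ∣ H)
    (f : ℕ → ℝ) :
    ∑ x ∈ Finset.range H, (bavg H L f x - bavg H L' f x) ^ 2 =
      ∑ x ∈ Finset.range H, bavg H L f x ^ 2 - ∑ x ∈ Finset.range H, bavg H L' f x ^ 2 := by
  have hL : 0 < L := Nat.pos_of_dvd_of_pos hLL hL'
  have h1 := bavg_adj H L hL (hLL.trans hd) f (bavg H L' f)
    (fun x y h => bavg_const _ _ _ _ _ (div_coarse L L' x y hLL h))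
  have h2 := bavg_adj H L' hL' hd f (bavg H L' f) (fun x y h => bavg_const _ _ _ _ _ h)
  have h3 : ∀ x, (bavg H L f x - bavg H L' f x) ^ 2 = bavg H L f x ^ 2
      - 2 * (bavg H L' f x * bavg H L f x) + bavg H L' f x * bavg H L' f x := fun x => by ring
  simp only [h3, Finset.sum_add_distrib, Finset.sum_sub_distrib, ← Finset.mul_sum]
  rw [h1, ← h2]
  simp only [pow_two]
  ring

theorem bavg_energy_le (H L : ℕ) (hL : 0 < L) (hd : L ∣ H)
    (f : ℕ → ℝ) (hf : ∀ x, 0 ≤ f x) (hf1 : ∀ x, f x ≤ 1) :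
    ∑ x ∈ Finset.range H, bavg H L f x ^ 2 ≤ ∑ x ∈ Finset.range H, f x := by
  have h2 := bavg_adj H L hL hd f (bavg H L f) (fun x y h => bavg_const _ _ _ _ _ h)
  simp only [pow_two]
  rw [h2]
  exact Finset.sum_le_sum fun x _ => mul_le_of_le_one_left (hf x) (bavg_le_one H L hL f hf1 x)

theorem bavg_window (H L : ℕ) (hL : 0 < L) (hd : L ∣ H) (f : ℕ → ℝ) (hf : ∀ x, 0 ≤ f x)
    (hf1 : ∀ x, f x ≤ 1) (a b : ℕ) (hb : b ≤ H) :
    ∑ x ∈ Finset.Ico a b, f x ≤ ∑ x ∈ Finset.Ico a b, bavg H L f x + 2 * L := by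
  classical
  set W := (Finset.range H).filter (fun x => a / L < x / L ∧ x / L < b / L) with hW
  have hsub : W ⊆ Finset.Ico a b := by
    intro x hx
    simp only [hW, Finset.mem_filter, Finset.mem_range] at hx
    rw [Finset.mem_Ico]
    constructor
    · by_contra hc
      have := Nat.div_le_div_right (c := L) (show x ≤ a by omega)
      omega
    · by_contra hc
      have := Nat.div_le_div_right (c := L) (show b ≤ x by omega)
      omega
  have hadj := bavg_adj H L hL hd f (fun x => if a / L < x / L ∧ x / L < b / L then 1 else 0)
    (fun x y h => by simp only [h])
  simp only [ite_mul, one_mul, zero_mul] at hadj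
  rw [← Finset.sum_filter, ← Finset.sum_filter, ← hW] at hadj
  have hc : ((Finset.Ico a b) \ W).card ≤ 2 * L := by
    have : (Finset.Ico a b) \ W ⊆ (Finset.range H).filter (fun y => y / L = a / L) ∪
        (Finset.range H).filter (fun y => y / L = b / L) := by
      intro x hx
      simp only [hW, Finset.mem_sdiff, Finset.mem_filter, Finset.mem_range, Finset.mem_Ico,
        Finset.mem_union] at hx ⊢
      have h1 := Nat.div_le_div_right (c := L) hx.1.1
      have h2 := Nat.div_le_div_right (c := L) hx.1.2.le
      have h3 : x < H := by omega
      simp only [h3, true_and] at hx ⊢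
      omega
    calc _ ≤ _ := Finset.card_le_card this
      _ ≤ _ := Finset.card_union_le _ _
      _ ≤ L + L := add_le_add (card_fib_le H L a hL) (card_fib_le H L b hL)
      _ = 2 * L := by ring
  rw [← Finset.sum_sdiff hsub, ← hadj]
  have h1 : ∑ x ∈ Finset.Ico a b \ W, f x ≤ 2 * L := by
    calc _ ≤ ∑ x ∈ Finset.Ico a b \ W, (1 : ℝ) := Finset.sum_le_sum fun x _ => hf1 x
      _ = (((Finset.Ico a b) \ W).card : ℝ) := by simp
      _ ≤ _ := by exact_mod_cast hc
  have h2 : ∑ x ∈ W, bavg H L f x ≤ ∑ x ∈ Finset.Ico a b, bavg H L f x :=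
    Finset.sum_le_sum_of_subset_of_nonneg hsub fun x _ _ => bavg_nonneg H L f hf x
  linarith

theorem run_bound (z : ℕ) (r w W p e : ℝ) (hw : w ≤ r) (hp : 0 ≤ p)
    (hW : 0 ≤ W) (he : 0 ≤ e) (h : w ≤ p * W + e) :
    (2 * z + 1) * w - W ≤ r * (if 1 < (2 * z + 1) * p then (2 * z + 1) - 1 / p else 0)
      + (2 * z + 1) * e := by
  have hz : (0 : ℝ) ≤ z := Nat.cast_nonneg z
  split_ifs with hh
  · have hp0 : 0 < p := by
      rcases hp.lt_or_eq with h | h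
      · exact h
      · rw [← h] at hh; norm_num at hh
    have h1 : (w - e) / p ≤ W := by rw [div_le_iff₀ hp0]; linarith
    have h2 : 0 ≤ 2 * (z : ℝ) + 1 - 1 / p := by
      rw [sub_nonneg, div_le_iff₀ hp0]; linarith
    have h3 : (w - e) * (2 * (z : ℝ) + 1 - 1 / p) ≤ r * (2 * (z : ℝ) + 1 - 1 / p) :=
      mul_le_mul_of_nonneg_right (by linarith) h2
    have h4 : (w - e) * (2 * (z : ℝ) + 1 - 1 / p) = (w - e) * (2 * z + 1) - (w - e) / p := by ring
    linarith
  · push Not at hh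
    nlinarith [mul_le_mul_of_nonneg_right hh hW]

theorem phi_bound (z q : ℕ) (p : ℕ → ℝ) (hp : ∀ a, 0 ≤ p a)
    (hs : ∑ a ∈ Finset.range q, p a ≤ 1) :
    ∑ a ∈ Finset.range q, (if 1 < (2 * (z : ℝ) + 1) * p a then (2 * (z : ℝ) + 1) - 1 / p a else 0)
      ≤ z * (z + 1) := by
  classical
  rw [← Finset.sum_filter]
  set S := (Finset.range q).filter (fun a => 1 < (2 * (z : ℝ) + 1) * p a) with hS
  have h1 : ∑ a ∈ S, ((2 * (z : ℝ) + 1) - 1 / p a) ≤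
      ∑ a ∈ S, ((2 * (z : ℝ) + 1) - 2 * S.card + S.card ^ 2 * p a) := by
    refine Finset.sum_le_sum fun a ha => ?_
    have hh := (Finset.mem_filter.1 ha).2
    have hp0 : 0 < p a := by
      rcases (hp a).lt_or_eq with h | h
      · exact h
      · rw [← h] at hh; norm_num at hh
    have : 1 / p a + S.card ^ 2 * p a - 2 * S.card = (1 - S.card * p a) ^ 2 / p a := by
      field_simp; ring
    have h2 : 0 ≤ (1 - S.card * p a) ^ 2 / p a := by positivity
    linarith
  have h2 : ∑ a ∈ S, p a ≤ 1 :=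
    (Finset.sum_le_sum_of_subset_of_nonneg (Finset.filter_subset _ _) fun a _ _ => hp a).trans hs
  rw [Finset.sum_add_distrib, ← Finset.mul_sum, Finset.sum_const, nsmul_eq_mul] at h1
  have h3 : (S.card : ℝ) ^ 2 * ∑ a ∈ S, p a ≤ S.card ^ 2 * 1 :=
    mul_le_mul_of_nonneg_left h2 (by positivity)
  have h4 : (0 : ℝ) ≤ ((S.card : ℝ) - z) * (S.card - z - 1) := by
    have : (0 : ℤ) ≤ ((S.card : ℤ) - z) * (S.card - z - 1) := by
      rcases le_or_gt (S.card : ℤ) z with h | h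
      · exact mul_nonneg_of_nonpos_of_nonpos (by omega) (by omega)
      · exact mul_nonneg (by omega) (by omega)
    exact_mod_cast this
  nlinarith

theorem count_window (a : ℕ) (l0 l : List ℕ) :
    l.count a ≤ ((Finset.Ico l0.length (l0.length + l.length)).filter
      (fun x => (l0 ++ l)[x]? = some a)).card := by
  induction l using List.reverseRecOn with
  | nil => simp
  | append_singleton l b ih =>
    rw [List.count_append, List.length_append, List.length_singleton, ← add_assoc,
      Finset.card_filter, Finset.sum_Ico_succ_top (by omega)]
    refine add_le_add ?_ ?_
    · refine ih.trans ?_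
      rw [Finset.card_filter]
      refine Finset.sum_le_sum fun x hx => ?_
      rw [Finset.mem_Ico] at hx
      rw [← List.append_assoc, List.getElem?_append_left (l₁ := l0 ++ l) (by simp; omega)]
    · rw [← List.append_assoc, ← List.length_append, List.getElem?_append_right (by simp)]
      by_cases h : b = a
      · simp [h]
      · simp [h]

theorem windows (q r : ℕ) (hr : 0 < r) (M : ℕ) : ∀ (u v : List ℕ),
    u.Sublist ((List.range (M * r)).map (fun t => t / r % q)) → u.Sublist v →
    ∃ α w : ℕ → ℕ, Monotone α ∧ α 0 = 0 ∧ α M ≤ v.length ∧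
      ∑ j ∈ Finset.range M, w j = u.length ∧ ∀ j < M, w j ≤ r ∧
        w j ≤ ((Finset.Ico (α j) (α (j+1))).filter (fun x => v[x]? = some (j % q))).card := by
  induction M with
  | zero =>
    intro u v h1 h2
    refine ⟨fun _ => 0, fun _ => 0, fun _ _ _ => le_rfl, rfl, Nat.zero_le _, ?_, ?_⟩
    · simp at h1
      simp [h1]
    · simp
  | succ M ih =>
    intro u v h1 h2
    have hA : (List.range ((M + 1) * r)).map (fun t => t / r % q) =
        (List.range (M * r)).map (fun t => t / r % q) ++ List.replicate r (M % q) := by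
      rw [add_mul, one_mul, List.range_add, List.map_append]
      congr 1
      rw [List.map_map, List.eq_replicate_iff]
      refine ⟨by simp, ?_⟩
      intro b hb
      rw [List.mem_map] at hb
      obtain ⟨t, ht, rfl⟩ := hb
      rw [List.mem_range] at ht
      simp only [Function.comp]
      rw [add_comm, Nat.add_mul_div_right _ _ hr, Nat.div_eq_of_lt ht, zero_add]
    rw [hA, List.sublist_append_iff] at h1
    obtain ⟨u1, u2, rfl, hu1, hu2⟩ := h1
    rw [List.append_sublist_iff] at h2
    obtain ⟨v1, v2, rfl, hv1, hv2⟩ := h2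
    obtain ⟨α, w, hmono, h0, hM, hsum, hw⟩ := ih u1 v1 hu1 hv1
    have hlen : (v1 ++ v2).length = v1.length + v2.length := List.length_append
    refine ⟨fun j => if j ≤ M then α j else (v1 ++ v2).length,
      fun j => if j < M then w j else u2.length, ?_, ?_, ?_, ?_, ?_⟩
    · intro i j hij
      dsimp only
      split_ifs with ha hb
      · exact hmono hij
      · have := hmono ha
        omega
      · omega
      · exact le_rfl
    · simpa using h0
    · simp
    · rw [Finset.sum_range_succ, List.length_append, ← hsum]
      simp only [lt_irrefl, if_false]
      congr 1
      refine Finset.sum_congr rfl fun j hj => ?_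
      rw [if_pos (Finset.mem_range.1 hj)]
    · intro j hj
      rcases Nat.lt_succ_iff_lt_or_eq.1 hj with hj' | rfl
      · have e1 : j ≤ M := by omega
        have e2 : j + 1 ≤ M := by omega
        simp only [hj', e1, e2, if_true]
        refine ⟨(hw j hj').1, (hw j hj').2.trans (Finset.card_le_card ?_)⟩
        intro x hx
        rw [Finset.mem_filter] at hx ⊢
        refine ⟨hx.1, ?_⟩
        have h5 := (Finset.mem_Ico.1 hx.1).2
        have h6 := hmono e2
        rw [List.getElem?_append_left (by omega)]
        exact hx.2
      · simp only [lt_irrefl, le_refl, if_true, if_false, Nat.not_succ_le_self]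
        have hu2' : u2.length ≤ r := by simpa using hu2.length_le
        refine ⟨hu2', ?_⟩
        have h7 : u2 = List.replicate u2.length (j % q) := by
          rw [List.eq_replicate_iff]
          refine ⟨rfl, fun b hb => ?_⟩
          exact List.eq_of_mem_replicate (hu2.subset hb)
        have h8 : u2.length ≤ v2.count (j % q) := by
          have := hv2.count_le (j % q)
          have h9 : u2.count (j % q) = u2.length := by
            conv_lhs => rw [h7]
            simp
          omega
        refine h8.trans ((count_window (j % q) v1 v2).trans (Finset.card_le_card ?_))
        intro x hx
        rw [Finset.mem_filter, Finset.mem_Ico] at hx ⊢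
        refine ⟨⟨by omega, by omega⟩, hx.2⟩

theorem sum_windows (α : ℕ → ℕ) (hα : Monotone α) (G : ℕ → ℝ) (b q : ℕ) :
    ∑ i ∈ Finset.range q, ∑ x ∈ Finset.Ico (α (b + i)) (α (b + i + 1)), G x =
      ∑ x ∈ Finset.Ico (α b) (α (b + q)), G x := by
  induction q with
  | zero => simp
  | succ q ih =>
    rw [Finset.sum_range_succ, ih, Finset.sum_Ico_consecutive _ (hα (by omega)) (hα (by omega))]
    rfl

theorem period_bound (H Lm Lp q z r b : ℕ) (hLm : 0 < Lm) (hLp : 0 < Lp) (hdm : Lm ∣ H)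
    (f : ℕ → ℕ → ℝ) (hf0 : ∀ a x, 0 ≤ f a x) (hf1 : ∀ x, ∑ a ∈ Finset.range q, f a x ≤ 1)
    (hf2 : ∀ a x, f a x ≤ 1)
    (α w : ℕ → ℕ) (hα : Monotone α) (hH : α (b + q) ≤ H) (hb : q ∣ b)
    (hw : ∀ i < q, w (b + i) ≤ r ∧
      (w (b + i) : ℝ) ≤ ∑ x ∈ Finset.Ico (α (b + i)) (α (b + i + 1)), f ((b + i) % q) x)
    (G : ℕ → ℝ) (hG0 : ∀ x, 0 ≤ G x)
    (hG : ∀ a < q, ∀ x, bavg H Lm (f a) x - bavg H Lp (f a) x ≤ G x) :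
    (2 * (z : ℝ) + 1) * ∑ i ∈ Finset.range q, (w (b + i) : ℝ) - ((α (b + q) : ℝ) - α b) ≤
      r * (z * (z + 1)) +
      2 * z * q * r * (((α (b + q) / Lp : ℕ) : ℝ) - ((α b / Lp : ℕ) : ℝ)) +
      (2 * z + 1) * (q * (2 * Lm) + ∑ x ∈ Finset.Ico (α b) (α (b + q)), G x) := by
  have hz : (0 : ℝ) ≤ z := Nat.cast_nonneg z
  have htel : ((α (b + q) : ℝ) - α b) =
      ∑ i ∈ Finset.range q, ((α (b + i + 1) : ℝ) - α (b + i)) :=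
    (Finset.sum_range_sub (fun i => (α (b + i) : ℝ)) q).symm
  have hW0 : ∀ i, (0 : ℝ) ≤ (α (b + i + 1) : ℝ) - α (b + i) := fun i => by
    have := hα (show b + i ≤ b + i + 1 by omega)
    rw [sub_nonneg]; exact_mod_cast this
  have hmod : ∀ i < q, (b + i) % q = i := by
    intro i hi
    obtain ⟨c, rfl⟩ := hb
    rw [Nat.mul_add_mod, Nat.mod_eq_of_lt hi]
  have hcard : ∀ i, (((Finset.Ico (α (b + i)) (α (b + i + 1))).card : ℕ) : ℝ) =
      (α (b + i + 1) : ℝ) - α (b + i) := fun i => by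
    rw [Nat.card_Ico, Nat.cast_sub (hα (by omega))]
  have hGs : 0 ≤ ∑ x ∈ Finset.Ico (α b) (α (b + q)), G x := Finset.sum_nonneg fun x _ => hG0 x
  have hle : α b / Lp ≤ α (b + q) / Lp := Nat.div_le_div_right (hα (by omega))
  rcases hle.lt_or_eq with hlt | heq
  · have h1 : (1 : ℝ) ≤ ((α (b + q) / Lp : ℕ) : ℝ) - ((α b / Lp : ℕ) : ℝ) := by
      have : ((α b / Lp : ℕ) : ℝ) + 1 ≤ ((α (b + q) / Lp : ℕ) : ℝ) := by exact_mod_cast hlt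
      linarith
    have h2 : (2 * (z : ℝ) + 1) * ∑ i ∈ Finset.range q, (w (b + i) : ℝ)
        - ((α (b + q) : ℝ) - α b) ≤ ∑ i ∈ Finset.range q, (2 * (z : ℝ) * r) := by
      rw [htel, Finset.mul_sum, ← Finset.sum_sub_distrib]
      refine Finset.sum_le_sum fun i hi => ?_
      have hi' := Finset.mem_range.1 hi
      obtain ⟨h3, h4⟩ := hw i hi'
      have h5 : (w (b + i) : ℝ) ≤ (α (b + i + 1) : ℝ) - α (b + i) := by
        refine h4.trans ?_
        rw [← hcard, Finset.card_eq_sum_ones, Nat.cast_sum, Nat.cast_one]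
        exact Finset.sum_le_sum fun x _ => hf2 _ x
      have h6 : (w (b + i) : ℝ) ≤ r := by exact_mod_cast h3
      nlinarith [mul_le_mul_of_nonneg_left h6 hz]
    rw [Finset.sum_const, Finset.card_range, nsmul_eq_mul] at h2
    have h7 : 2 * (z : ℝ) * q * r * 1 ≤ 2 * z * q * r *
      (((α (b + q) / Lp : ℕ) : ℝ) - ((α b / Lp : ℕ) : ℝ)) :=
      mul_le_mul_of_nonneg_left h1 (by positivity)
    have h8 : (0 : ℝ) ≤ r * (z * (z + 1)) := by positivity
    have h9 : 0 ≤ (2 * (z : ℝ) + 1) * (q * (2 * Lm) + ∑ x ∈ Finset.Ico (α b) (α (b + q)), G x) := by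
      positivity
    linarith
  · rw [heq, sub_self, mul_zero, add_zero]
    set p : ℕ → ℝ := fun a => bavg H Lp (f a) (α b) with hp
    have hp0 : ∀ a, 0 ≤ p a := fun a => bavg_nonneg _ _ _ (hf0 a) _
    have hps : ∑ a ∈ Finset.range q, p a ≤ 1 := by
      rw [hp, bavg_sum]
      exact bavg_le_one H Lp hLp _ hf1 _
    have hphi := phi_bound z q p hp0 hps
    set φ : ℕ → ℝ := fun a =>
      (if 1 < (2 * (z : ℝ) + 1) * p a then (2 * (z : ℝ) + 1) - 1 / p a else 0) with hφ
    have key : ∀ i ∈ Finset.range q,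
        (2 * (z : ℝ) + 1) * (w (b + i) : ℝ) - ((α (b + i + 1) : ℝ) - α (b + i)) ≤
        r * φ i + (2 * z + 1) *
          (2 * Lm + ∑ x ∈ Finset.Ico (α (b + i)) (α (b + i + 1)), G x) := by
      intro i hi
      have hi' := Finset.mem_range.1 hi
      obtain ⟨h3, h4⟩ := hw i hi'
      rw [hmod i hi'] at h4
      have hin : α (b + i + 1) ≤ α (b + q) := hα (by omega)
      have hin2 : α b ≤ α (b + i) := hα (by omega)
      refine run_bound z r _ _ (p i) _ (by exact_mod_cast h3) (hp0 i) (hW0 i) ?_ ?_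
      · have : 0 ≤ ∑ x ∈ Finset.Ico (α (b + i)) (α (b + i + 1)), G x :=
          Finset.sum_nonneg fun x _ => hG0 x
        positivity
      · have h5 := bavg_window H Lm hLm hdm (f i) (hf0 i) (hf2 i) (α (b + i)) (α (b + i + 1))
          (by omega)
        have h6 : ∑ x ∈ Finset.Ico (α (b + i)) (α (b + i + 1)), bavg H Lm (f i) x ≤
            ∑ x ∈ Finset.Ico (α (b + i)) (α (b + i + 1)), (p i + G x) := by
          refine Finset.sum_le_sum fun x hx => ?_
          rw [Finset.mem_Ico] at hx
          have h7 : bavg H Lp (f i) x = p i := by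
            refine bavg_const _ _ _ _ _ ?_
            have a1 := Nat.div_le_div_right (c := Lp) (show α b ≤ x by omega)
            have a2 := Nat.div_le_div_right (c := Lp) (show x ≤ α (b + q) by omega)
            omega
          have := hG i hi' x
          rw [h7] at this
          linarith
        rw [Finset.sum_add_distrib, Finset.sum_const, nsmul_eq_mul, hcard] at h6
        linarith
    have hsum := Finset.sum_le_sum key
    rw [Finset.sum_sub_distrib, ← htel, ← Finset.mul_sum, Finset.sum_add_distrib, ← Finset.mul_sum,
      ← Finset.mul_sum, Finset.sum_add_distrib, Finset.sum_const, Finset.card_range, nsmul_eq_mul,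
      sum_windows α hα G] at hsum
    have : (r : ℝ) * ∑ i ∈ Finset.range q, φ i ≤ r * (z * (z + 1)) :=
      mul_le_mul_of_nonneg_left hphi (Nat.cast_nonneg r)
    linarith

theorem total_bound (H Lm Lp q z r Q : ℕ) (hLm : 0 < Lm) (hLp : 0 < Lp) (hdm : Lm ∣ H)
    (f : ℕ → ℕ → ℝ) (hf0 : ∀ a x, 0 ≤ f a x) (hf1 : ∀ x, ∑ a ∈ Finset.range q, f a x ≤ 1)
    (hf2 : ∀ a x, f a x ≤ 1)
    (α w : ℕ → ℕ) (hα : Monotone α) (h0 : α 0 = 0) (hH : α (q * Q) ≤ H)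
    (hw : ∀ j < q * Q, w j ≤ r ∧
      (w j : ℝ) ≤ ∑ x ∈ Finset.Ico (α j) (α (j + 1)), f (j % q) x)
    (G : ℕ → ℝ) (hG0 : ∀ x, 0 ≤ G x)
    (hG : ∀ a < q, ∀ x, bavg H Lm (f a) x - bavg H Lp (f a) x ≤ G x) :
    (2 * (z : ℝ) + 1) * ∑ j ∈ Finset.range (q * Q), (w j : ℝ) - (α (q * Q) : ℝ) ≤
      Q * (r * (z * (z + 1))) +
      2 * z * q * r * ((α (q * Q) / Lp : ℕ) : ℝ) +
      (2 * z + 1) * (Q * (q * (2 * Lm)) + ∑ x ∈ Finset.range (α (q * Q)), G x) := by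
  induction Q with
  | zero => simp [h0]
  | succ Q ih =>
    have e : q * (Q + 1) = q * Q + q := by ring
    rw [e] at hH hw ⊢
    have h1 := ih ((hα (by omega)).trans hH) (fun j hj => hw j (by omega))
    have h2 := period_bound H Lm Lp q z r (q * Q) hLm hLp hdm f hf0 hf1 hf2 α w hα hH
      (dvd_mul_right q Q) (fun i hi => hw (q * Q + i) (by omega)) G hG0 hG
    have h3 : ∑ x ∈ Finset.range (α (q * Q)), G x +
        ∑ x ∈ Finset.Ico (α (q * Q)) (α (q * Q + q)), G x =
        ∑ x ∈ Finset.range (α (q * Q + q)), G x :=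
      Finset.sum_range_add_sum_Ico _ (hα (by omega))
    rw [Finset.sum_range_add, ← h3]
    push_cast
    linarith
noncomputable def ind (v : List ℕ) (a x : ℕ) : ℝ := if v[x]? = some a then 1 else 0

theorem ind_nonneg (v : List ℕ) (a x : ℕ) : 0 ≤ ind v a x := by
  unfold ind; split_ifs <;> norm_num

theorem ind_le_one (v : List ℕ) (a x : ℕ) : ind v a x ≤ 1 := by
  unfold ind; split_ifs <;> norm_num

theorem ind_sum (v : List ℕ) (q x : ℕ) :
    ∑ a ∈ Finset.range q, ind v a x ≤ if x < v.length then 1 else 0 := by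
  unfold ind
  split_ifs with h
  · simp only [List.getElem?_eq_getElem h, Option.some.injEq]
    rw [Finset.sum_ite_eq]
    split_ifs <;> norm_num
  · simp [List.getElem?_eq_none (not_lt.1 h)]

theorem ind_sum_one (v : List ℕ) (q x : ℕ) :
    ∑ a ∈ Finset.range q, ind v a x ≤ 1 :=
  (ind_sum v q x).trans (by split_ifs <;> norm_num)

theorem ind_total (v : List ℕ) (q H : ℕ) :
    ∑ a ∈ Finset.range q, ∑ x ∈ Finset.range H, ind v a x ≤ v.length := by
  rw [Finset.sum_comm]
  calc _ ≤ ∑ x ∈ Finset.range H, (if x < v.length then (1 : ℝ) else 0) :=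
        Finset.sum_le_sum fun x _ => ind_sum v q x
    _ = (((Finset.range H).filter (fun x => x < v.length)).card : ℝ) := by simp
    _ ≤ ((Finset.range v.length).card : ℝ) := by
        have : (Finset.range H).filter (fun x => x < v.length) ⊆ Finset.range v.length := by
          intro x hx
          simpa using (Finset.mem_filter.1 hx).2
        exact_mod_cast Finset.card_le_card this
    _ = _ := by simp

noncomputable def energy (v : List ℕ) (q s P j : ℕ) : ℝ :=
  ∑ a ∈ Finset.range q, ∑ x ∈ Finset.range (s ^ P), bavg (s ^ P) (s ^ j) (ind v a) x ^ 2

theorem energy_nonneg (v : List ℕ) (q s P j : ℕ) : 0 ≤ energy v q s P j :=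
  Finset.sum_nonneg fun _ _ => Finset.sum_nonneg fun _ _ => sq_nonneg _

theorem energy_le (v : List ℕ) (q s P j : ℕ) (hs : 0 < s) (hj : j ≤ P) :
    energy v q s P j ≤ v.length :=
  (Finset.sum_le_sum fun a _ => bavg_energy_le (s ^ P) (s ^ j) (by positivity)
    (pow_dvd_pow s hj) (ind v a) (ind_nonneg v a) (ind_le_one v a)).trans (ind_total v q _)

theorem energy_diff (v : List ℕ) (q s P i j : ℕ) (hs : 0 < s) (hij : i ≤ j) (hj : j ≤ P) :
    ∑ x ∈ Finset.range (s ^ P), ∑ a ∈ Finset.range q,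
      (bavg (s ^ P) (s ^ i) (ind v a) x - bavg (s ^ P) (s ^ j) (ind v a) x) ^ 2 =
    energy v q s P i - energy v q s P j := by
  rw [Finset.sum_comm, energy, energy, ← Finset.sum_sub_distrib]
  refine Finset.sum_congr rfl fun a _ => ?_
  exact bavg_energy _ _ _ (by positivity) (pow_dvd_pow s hij) (pow_dvd_pow s hj) _

set_option maxHeartbeats 2000000 in
theorem step (q z s n m k P : ℕ) (ε : ℝ) (u v : List ℕ) (hz : 1 ≤ z) (hzq : z + 1 ≤ q)
    (hε : 0 < ε) (hε1 : ε ≤ 1) (hs : 2 ≤ s) (hT : 96 * (q : ℝ) ^ 2 ≤ ε * (s : ℝ) ^ m)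
    (hmk : m ≤ k) (hkn : s ^ (k + m) < n) (hP : k + m ≤ P) (hNP : v.length ≤ s ^ P)
    (huv : u.Sublist v) (hu : u.Sublist ((List.range n).map (fun t => t / s ^ k % q)))
    (hadv : (n : ℝ) * (z * (z + 1) / q + z * ε) ≤ (2 * z + 1) * u.length - v.length) :
    (0 : ℝ) < v.length ∧ v.length * (ε ^ 2 / (144 * q ^ 2)) ≤
      energy v q s P (k - m) - energy v q s P (k + m) := by
  have hs0 : 0 < s := by omega
  have hq0 : 0 < q := by omega
  set r := s ^ k with hr
  have hr0 : 0 < r := by positivity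
  set Q := n / (q * r) + 1 with hQ
  have hqr : 0 < q * r := by positivity
  have hn1 : n ≤ q * Q * r := by
    have := Nat.lt_div_mul_add (a := n) hqr
    rw [hQ]; nlinarith
  have hn2 : q * Q * r ≤ n + q * r := by
    have := Nat.div_mul_le_self n (q * r)
    rw [hQ]; nlinarith
  have hsub : u.Sublist ((List.range (q * Q * r)).map (fun t => t / r % q)) := by
    refine hu.trans (List.Sublist.map _ ?_)
    exact List.range_sublist.2 hn1
  obtain ⟨α, w, hα, h0, hN, hsum, hw⟩ := windows q r hr0 (q * Q) u v hsub huv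
  set N := v.length with hNdef
  set H := s ^ P with hHdef
  set Lm := s ^ (k - m) with hLm
  set Lp := s ^ (k + m) with hLp
  set G : ℕ → ℝ := fun x => Real.sqrt (∑ a ∈ Finset.range q,
      (bavg H Lm (ind v a) x - bavg H Lp (ind v a) x) ^ 2) with hG
  have hGsq : ∀ x, G x ^ 2 = ∑ a ∈ Finset.range q,
      (bavg H Lm (ind v a) x - bavg H Lp (ind v a) x) ^ 2 := fun x =>
    Real.sq_sqrt (Finset.sum_nonneg fun _ _ => sq_nonneg _)
  have hG0 : ∀ x, 0 ≤ G x := fun x => Real.sqrt_nonneg _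
  have htot := total_bound H Lm Lp q z r Q (by positivity) (by positivity)
    (pow_dvd_pow s (by omega)) (ind v) (ind_nonneg v) (ind_sum_one v q) (ind_le_one v) α w hα h0
    (hN.trans hNP) (fun j hj => ⟨(hw j hj).1, by
      refine (Nat.cast_le.2 (hw j hj).2).trans (le_of_eq ?_)
      simp [ind]⟩) G hG0
    (fun a ha x => by
      refine Real.le_sqrt_of_sq_le ?_
      exact Finset.single_le_sum (f := fun a => (bavg H Lm (ind v a) x - bavg H Lp (ind v a) x) ^ 2)
        (fun _ _ => sq_nonneg _) (Finset.mem_range.2 ha))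
  have hsum' : ∑ j ∈ Finset.range (q * Q), (w j : ℝ) = u.length := by exact_mod_cast hsum
  rw [hsum'] at htot
  have hGN : ∑ x ∈ Finset.range (α (q * Q)), G x ≤ ∑ x ∈ Finset.range N, G x :=
    Finset.sum_le_sum_of_subset_of_nonneg (Finset.range_mono hN) fun x _ _ => hG0 x
  set S := ∑ x ∈ Finset.range N, G x with hS
  have hS2 : S ^ 2 ≤ N * (energy v q s P (k - m) - energy v q s P (k + m)) := by
    have h1 : S ^ 2 ≤ N * ∑ x ∈ Finset.range N, G x ^ 2 := by
      simpa using sq_sum_le_card_mul_sum_sq (s := Finset.range N) (f := G)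
    have h2 : ∑ x ∈ Finset.range N, G x ^ 2 ≤ ∑ x ∈ Finset.range H, G x ^ 2 :=
      Finset.sum_le_sum_of_subset_of_nonneg (Finset.range_mono hNP) fun x _ _ => sq_nonneg _
    have h3 : ∑ x ∈ Finset.range H, G x ^ 2 =
        energy v q s P (k - m) - energy v q s P (k + m) := by
      rw [← energy_diff v q s P (k - m) (k + m) hs0 (by omega) hP]
      exact Finset.sum_congr rfl fun x _ => hGsq x
    rw [h3] at h2
    exact h1.trans (mul_le_mul_of_nonneg_left h2 (Nat.cast_nonneg N))
  have hul : u.length ≤ n := by simpa using hu.length_le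
  set T : ℝ := (s : ℝ) ^ m with hTdef
  have hT0 : 0 < T := by positivity
  have hzR : (1 : ℝ) ≤ z := by exact_mod_cast hz
  have hzqR : (z : ℝ) + 1 ≤ q := by exact_mod_cast hzq
  have hqR : (2 : ℝ) ≤ q := by linarith
  have hrT : (r : ℝ) = Lm * T := by
    rw [hr, hLm, hTdef]; push_cast; rw [← pow_add]; congr 1; omega
  have hLpT : (Lp : ℝ) = r * T := by
    rw [hr, hLp, hTdef]; push_cast; rw [← pow_add]
  have hnR : (r : ℝ) * T ≤ n := by rw [← hLpT]; exact_mod_cast hkn.le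
  have hrR : (0 : ℝ) < r := by exact_mod_cast hr0
  have hn0 : (0 : ℝ) < n := lt_of_lt_of_le (by positivity) hnR
  have hulR : (u.length : ℝ) ≤ n := by exact_mod_cast hul
  have hNn : (N : ℝ) ≤ 2 * q * n := by
    have h1 : 0 ≤ (n : ℝ) * (z * (z + 1) / q + z * ε) := by positivity
    have h2 : (2 * (z : ℝ) + 1) * u.length ≤ (2 * z + 1) * n :=
      mul_le_mul_of_nonneg_left hulR (by positivity)
    have h3 : (2 * (z : ℝ) + 1) * n ≤ (2 * q) * n :=
      mul_le_mul_of_nonneg_right (by linarith) hn0.le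
    linarith
  have hn2R : (q : ℝ) * Q * r ≤ n + q * r := by exact_mod_cast hn2
  have hA : 96 * (q : ℝ) ^ 2 * r ≤ ε * n := by
    calc 96 * (q : ℝ) ^ 2 * r ≤ ε * T * r := mul_le_mul_of_nonneg_right hT hrR.le
      _ = ε * (r * T) := by ring
      _ ≤ ε * n := mul_le_mul_of_nonneg_left hnR hε.le
  have b1 : (Q : ℝ) * (r * (z * (z + 1))) ≤ n * (z * (z + 1) / q) + z * (ε * n) / 8 := by
    have h1 : (Q : ℝ) * r ≤ n / q + r := by
      rw [← sub_le_iff_le_add, le_div_iff₀ (by positivity)]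
      nlinarith
    have h2 : (Q : ℝ) * r * (z * (z + 1)) ≤ (n / q + r) * (z * (z + 1)) :=
      mul_le_mul_of_nonneg_right h1 (by positivity)
    have h3 : (r : ℝ) * (z + 1) ≤ ε * n / 8 := by
      have h4 : (r : ℝ) * (z + 1) ≤ r * q := mul_le_mul_of_nonneg_left hzqR hrR.le
      have h5 : (r : ℝ) * q ≤ r * q ^ 2 := mul_le_mul_of_nonneg_left (by nlinarith) hrR.le
      have : 0 ≤ (r : ℝ) * q ^ 2 := by positivity
      linarith
    have h6 := mul_le_mul_of_nonneg_left h3 (show (0 : ℝ) ≤ z by positivity)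
    have h7 : ((n : ℝ) / q + r) * (z * (z + 1)) = n * (z * (z + 1) / q) + z * (r * (z + 1)) := by
      ring
    linarith
  have b2 : 2 * (z : ℝ) * q * r * ((α (q * Q) / Lp : ℕ) : ℝ) ≤ z * (ε * n) / 8 := by
    have h1 : ((α (q * Q) / Lp : ℕ) : ℝ) ≤ 2 * q * n / (r * T) := by
      rw [← hLpT]
      refine Nat.cast_div_le.trans ?_
      gcongr
      exact le_trans (by exact_mod_cast hN) hNn
    have h2 : 2 * (z : ℝ) * q * r * ((α (q * Q) / Lp : ℕ) : ℝ) ≤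
        2 * z * q * r * (2 * q * n / (r * T)) := mul_le_mul_of_nonneg_left h1 (by positivity)
    have h3 : 2 * (z : ℝ) * q * r * (2 * q * n / (r * T)) = z * n * (4 * q ^ 2 / T) := by
      field_simp; ring
    have h4 : 4 * (q : ℝ) ^ 2 / T ≤ ε / 8 := by
      rw [div_le_iff₀ hT0]; linarith [sq_nonneg (q : ℝ)]
    have h5 : (z : ℝ) * n * (4 * q ^ 2 / T) ≤ z * n * (ε / 8) :=
      mul_le_mul_of_nonneg_left h4 (by positivity)
    linarith
  have b3 : (2 * (z : ℝ) + 1) * (Q * (q * (2 * Lm))) ≤ z * (ε * n) / 8 := by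
    have h1 : (q : ℝ) * Q * r ≤ 2 * n := by
      have h4 : ε * n ≤ 1 * n := mul_le_mul_of_nonneg_right hε1 hn0.le
      have h5 : (q : ℝ) * r ≤ 96 * q ^ 2 * r :=
        mul_le_mul_of_nonneg_right (by nlinarith only [hqR]) hrR.le
      linarith only [h4, h5, hn2R, hA]
    have h2 : (q : ℝ) * Q * Lm * T ≤ 2 * n := by rw [hrT] at h1; linarith
    have h3 : (q : ℝ) * Q * Lm * 96 ≤ 2 * (ε * n) := by
      have h4 : (96 : ℝ) ≤ ε * T := le_trans (by nlinarith only [hqR]) hT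
      have h5 : (q : ℝ) * Q * Lm * 96 ≤ q * Q * Lm * (ε * T) :=
        mul_le_mul_of_nonneg_left h4 (by positivity)
      have h6 := mul_le_mul_of_nonneg_left h2 hε.le
      linarith
    have h7 : (2 * (z : ℝ) + 1) * (Q * (q * (2 * Lm))) ≤ (3 * z) * (Q * (q * (2 * Lm))) :=
      mul_le_mul_of_nonneg_right (by linarith) (by positivity)
    have h8 := mul_le_mul_of_nonneg_left h3 (show (0 : ℝ) ≤ z by positivity)
    linarith
  have b4 : (2 * (z : ℝ) + 1) * ∑ x ∈ Finset.range (α (q * Q)), G x ≤ 3 * z * S := by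
    have h1 : 0 ≤ S := Finset.sum_nonneg fun x _ => hG0 x
    have h2 := mul_le_mul_of_nonneg_left hGN (show 0 ≤ 2 * (z : ℝ) + 1 by positivity)
    have h3 : (2 * (z : ℝ) + 1) * S ≤ 3 * z * S := mul_le_mul_of_nonneg_right (by linarith) h1
    linarith
  have hαN : (α (q * Q) : ℝ) ≤ N := by exact_mod_cast hN
  have hSn : n * ε / 6 ≤ S := by
    have h1 : (z : ℝ) * (n * ε / 6) ≤ z * S := by
      have : 0 ≤ (z : ℝ) * (ε * n) := by positivity
      linarith
    exact le_of_mul_le_mul_left h1 (by positivity)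
  have hfin : (n * ε / 6) ^ 2 ≤ N * (energy v q s P (k - m) - energy v q s P (k + m)) :=
    (pow_le_pow_left₀ (by positivity) hSn 2).trans hS2
  have hN0 : (0 : ℝ) < N := by
    rcases (Nat.cast_nonneg (α := ℝ) N).lt_or_eq with h | h
    · exact h
    · rw [← h, zero_mul] at hfin
      have : 0 < (n * ε / 6) ^ 2 := by positivity
      linarith
  refine ⟨hN0, le_of_mul_le_mul_left (le_trans ?_ hfin) hN0⟩
  have h1 : (N : ℝ) ^ 2 ≤ (2 * q * n) ^ 2 := pow_le_pow_left₀ hN0.le hNn 2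
  calc (N : ℝ) * (N * (ε ^ 2 / (144 * q ^ 2))) = N ^ 2 * (ε ^ 2 / (144 * q ^ 2)) := by ring
    _ ≤ (2 * q * n) ^ 2 * (ε ^ 2 / (144 * q ^ 2)) := mul_le_mul_of_nonneg_right h1 (by positivity)
    _ = (n * ε / 6) ^ 2 := by field_simp; ring

theorem telescope (e : ℕ → ℝ) (B : ℝ) (X d : ℕ) (h0 : ∀ t, 0 ≤ e t) (hB : ∀ t < d, e t ≤ B) :
    ∑ t ∈ Finset.range X, (e t - e (d + t)) ≤ d * B := by
  have h1 : ∑ t ∈ Finset.range (d + X), e t =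
      ∑ t ∈ Finset.range d, e t + ∑ t ∈ Finset.range X, e (d + t) := Finset.sum_range_add e d X
  have h2 : ∑ t ∈ Finset.range X, e t ≤ ∑ t ∈ Finset.range (d + X), e t :=
    Finset.sum_le_sum_of_subset_of_nonneg (Finset.range_mono (by omega)) fun x _ _ => h0 x
  have h3 : ∑ t ∈ Finset.range d, e t ≤ d * B := by
    calc _ ≤ ∑ t ∈ Finset.range d, B := Finset.sum_le_sum fun t ht => hB t (Finset.mem_range.1 ht)
      _ = _ := by simp
  rw [Finset.sum_sub_distrib]
  linarith

theorem T_bound (q s : ℕ) (ε : ℝ) (hε : 0 < ε) (hε1 : ε < 1) (hs : (s : ℝ) = 1 / ε ^ 4) :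
    2 ≤ s ∧ 96 * (q : ℝ) ^ 2 ≤ ε * (s : ℝ) ^ (2 * q + 8) := by
  have h1 : (1 : ℝ) < s := by
    rw [hs, lt_div_iff₀ (by positivity), one_mul]
    exact pow_lt_one₀ hε.le hε1 (by norm_num)
  have h2 : 2 ≤ s := by
    have : 1 < s := by exact_mod_cast h1
    omega
  refine ⟨h2, ?_⟩
  have h2R : (2 : ℝ) ≤ s := by exact_mod_cast h2
  have h3 : 1 ≤ ε * s := by
    rw [hs]
    have : ε * (1 / ε ^ 4) = 1 / ε ^ 3 := by field_simp
    rw [this, le_div_iff₀ (by positivity), one_mul]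
    exact pow_le_one₀ hε.le hε1.le
  have h4 : (2 : ℝ) ^ (2 * q + 7) ≤ (s : ℝ) ^ (2 * q + 7) := pow_le_pow_left₀ (by norm_num) h2R _
  have h5 : (q : ℝ) ≤ 2 ^ q := by exact_mod_cast Nat.lt_two_pow_self.le
  have h6 : (q : ℝ) ^ 2 ≤ (2 ^ q) ^ 2 := pow_le_pow_left₀ (Nat.cast_nonneg _) h5 2
  have h7 : (2 : ℝ) ^ (2 * q + 7) = 128 * (2 ^ q) ^ 2 := by
    rw [pow_add, mul_comm 2 q, pow_mul]; norm_num; ring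
  have h8 : 1 * (s : ℝ) ^ (2 * q + 7) ≤ (ε * s) * (s : ℝ) ^ (2 * q + 7) :=
    mul_le_mul_of_nonneg_right h3 (by positivity)
  have h9 : (ε * s) * (s : ℝ) ^ (2 * q + 7) = ε * (s : ℝ) ^ (2 * q + 8) := by
    rw [show 2 * q + 8 = (2 * q + 7) + 1 from rfl, pow_succ (s : ℝ) (2 * q + 7)]; ring
  have h10 := sq_nonneg (q : ℝ)
  linarith

theorem adv_bound (q z n U N : ℕ) (hz : 1 ≤ z) (hzq : z + 1 ≤ q) (ε δ γ : ℝ) (hε : 0 < ε)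
    (h : γ + 2 * z * δ ≤ (1 - ε) * ((2 * (q : ℝ) - 1) * z - (z : ℝ) ^ 2) / q)
    (h1 : (n : ℝ) - U ≤ δ * n) (h2 : (N : ℝ) - U ≤ γ * n) :
    (n : ℝ) * (z * (z + 1) / q + z * ε) ≤ (2 * z + 1) * U - N := by
  have hzR : (1 : ℝ) ≤ z := by exact_mod_cast hz
  have hzqR : (z : ℝ) + 1 ≤ q := by exact_mod_cast hzq
  have hq : (0 : ℝ) < q := by linarith
  have h3 := mul_le_mul_of_nonneg_left h (Nat.cast_nonneg (α := ℝ) n)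
  have h4 := mul_le_mul_of_nonneg_left h1 (show (0 : ℝ) ≤ 2 * z by linarith)
  have h5 : (1 - ε) * ((2 * (q : ℝ) - 1) * z - (z : ℝ) ^ 2) / q
      = 2 * z - z * (z + 1) / q - z * ε - ε * z * (q - 1 - z) / q := by
    field_simp; ring
  have h6 : 0 ≤ ε * z * (q - 1 - z) / q :=
    div_nonneg (mul_nonneg (by positivity) (by linarith)) hq.le
  have h7 : (n : ℝ) * ((1 - ε) * ((2 * (q : ℝ) - 1) * z - (z : ℝ) ^ 2) / q) ≤
      n * (2 * z - z * (z + 1) / q - z * ε) :=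
    mul_le_mul_of_nonneg_left (by rw [h5]; linarith) (Nat.cast_nonneg n)
  nlinarith

theorem bukhMaQ_map (q r l : ℕ) (h : 0 < q) :
    (bukhMaQ q r l).map Fin.val = (List.range l).map (fun t => t / r % q) := by
  simp [bukhMaQ, h, Function.comp_def]

theorem good_count (q z s n m P R : ℕ) (ε : ℝ) (v : List ℕ) (hz : 1 ≤ z) (hzq : z + 1 ≤ q)
    (hε : 0 < ε) (hε1 : ε ≤ 1) (hs : 2 ≤ s) (hT : 96 * (q : ℝ) ^ 2 ≤ ε * (s : ℝ) ^ m)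
    (hP : R + 2 * m ≤ P) (hNP : v.length ≤ s ^ P) (K : Finset ℕ)
    (hK : ∀ k ∈ K, m ≤ k ∧ k + m < R ∧ s ^ (k + m) < n ∧ ∃ u : List ℕ, u.Sublist v ∧
      u.Sublist ((List.range n).map (fun t => t / s ^ k % q)) ∧
      (n : ℝ) * (z * (z + 1) / q + z * ε) ≤ (2 * z + 1) * u.length - v.length) :
    (K.card : ℝ) ≤ 288 * m * q ^ 2 / ε ^ 2 := by
  have hs0 : 0 < s := by omega
  have hq : (0 : ℝ) < q := by exact_mod_cast (show 0 < q by omega)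
  rcases K.eq_empty_or_nonempty with rfl | ⟨k0, hk0⟩
  · simp; positivity
  have hstep : ∀ k ∈ K, (0 : ℝ) < v.length ∧ v.length * (ε ^ 2 / (144 * q ^ 2)) ≤
      energy v q s P (k - m) - energy v q s P (k + m) := by
    intro k hk
    obtain ⟨h1, h2, h3, u, h4, h5, h6⟩ := hK k hk
    exact step q z s n m k P ε u v hz hzq hε hε1 hs hT h1 h3 (by omega) hNP h4 h5 h6
  have hN0 := (hstep k0 hk0).1
  have hsub : K ⊆ Finset.Ico m R := by
    intro k hk
    have := hK k hk
    rw [Finset.mem_Ico]; omega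
  have h1 : (K.card : ℝ) * (v.length * (ε ^ 2 / (144 * q ^ 2))) ≤ (2 * m : ℕ) * v.length := by
    calc (K.card : ℝ) * (v.length * (ε ^ 2 / (144 * q ^ 2)))
        = ∑ k ∈ K, (v.length * (ε ^ 2 / (144 * q ^ 2)) : ℝ) := by simp
      _ ≤ ∑ k ∈ K, (energy v q s P (k - m) - energy v q s P (k + m)) :=
          Finset.sum_le_sum fun k hk => (hstep k hk).2
      _ ≤ ∑ k ∈ Finset.Ico m R, (energy v q s P (k - m) - energy v q s P (k + m)) := by
          refine Finset.sum_le_sum_of_subset_of_nonneg hsub fun k hk _ => ?_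
          rw [Finset.mem_Ico] at hk
          rw [← energy_diff v q s P (k - m) (k + m) hs0 (by omega) (by omega)]
          exact Finset.sum_nonneg fun _ _ => Finset.sum_nonneg fun _ _ => sq_nonneg _
      _ = ∑ t ∈ Finset.range (R - m), (energy v q s P t - energy v q s P (2 * m + t)) := by
          rw [Finset.sum_Ico_eq_sum_range]
          refine Finset.sum_congr rfl fun t _ => ?_
          congr 2 <;> omega
      _ ≤ _ := telescope _ _ _ _ (energy_nonneg v q s P)
          (fun t ht => energy_le v q s P t hs0 (by omega))
  have h2 : (v.length : ℝ) * (K.card * (ε ^ 2 / (144 * q ^ 2))) ≤ v.length * (2 * m) := by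
    push_cast at h1; linarith
  have h3 := le_of_mul_le_mul_left h2 hN0
  rw [le_div_iff₀ (by positivity)]
  rw [mul_div_assoc', div_le_iff₀ (by positivity)] at h3
  linarith

theorem stmt6 :
    ∃ c : ℝ, 0 < c ∧
      ∀ q : ℕ, 2 ≤ q → ∀ ε : ℝ, ε ∈ Set.Ioo (0 : ℝ) 1 → ∀ s : ℕ, (s : ℝ) = 1 / ε ^ 4 →
        ∃ n₀ : ℕ, ∀ n : ℕ, n₀ ≤ n →
          ∀ v : List (Fin q), ∀ z : ℕ, 1 ≤ z → z ≤ q - 1 →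
            ∀ δ γ : ℝ, 0 ≤ δ → 0 ≤ γ →
              γ + 2 * z * δ ≤ (1 - ε) * ((2 * (q : ℝ) - 1) * z - (z : ℝ) ^ 2) / q →
              (({k : ℕ | s ^ k < n ∧
                  ∃ u : List (Fin q), u.Sublist v ∧ u.Sublist (bukhMaQ q (s ^ k) n) ∧
                    (n : ℝ) - u.length ≤ δ * n ∧
                    (v.length : ℝ) - u.length ≤ γ * n} : Set ℕ).ncard : ℝ)
                ≤ c * q ^ 5 / ε ^ 2 := by
  refine ⟨2000, by norm_num, fun q hq ε hε s hs => ⟨0, fun n _ v z hz hzq δ γ _ _ hδγ => ?_⟩⟩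
  obtain ⟨hε0, hε1⟩ := hε
  have hzq' : z + 1 ≤ q := by omega
  have hq0 : 0 < q := by omega
  obtain ⟨hs2, hT⟩ := T_bound q s ε hε0 hε1 hs
  set m := 2 * q + 8 with hm
  set R := Nat.clog s n with hR
  set K : Set ℕ := {k : ℕ | s ^ k < n ∧
                  ∃ u : List (Fin q), u.Sublist v ∧ u.Sublist (bukhMaQ q (s ^ k) n) ∧
                    (n : ℝ) - u.length ≤ δ * n ∧
                    (v.length : ℝ) - u.length ≤ γ * n} with hK
  have hlt : ∀ k, s ^ k < n ↔ k < R := fun k => by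
    rw [hR, Nat.lt_clog_iff_pow_lt (by omega)]
  classical
  set Kg := (Finset.Ico m (R - m)).filter (fun k => k ∈ K) with hKg
  have hgood : (Kg.card : ℝ) ≤ 288 * m * q ^ 2 / ε ^ 2 := by
    refine good_count q z s n m (R + 2 * m + v.length) R ε (v.map Fin.val) hz hzq' hε0 hε1.le hs2 hT
      (by omega) ?_ Kg ?_
    · rw [List.length_map]
      calc v.length ≤ s ^ v.length := (Nat.lt_pow_self (by omega)).le
        _ ≤ _ := Nat.pow_le_pow_right (by omega) (by omega)
    · intro k hk
      rw [hKg, Finset.mem_filter, Finset.mem_Ico] at hk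
      obtain ⟨⟨h1, h2⟩, h3, u, h4, h5, h6, h7⟩ := hk
      refine ⟨h1, by omega, (hlt _).2 (by omega), u.map Fin.val, h4.map _, ?_, ?_⟩
      · rw [← bukhMaQ_map q (s ^ k) n hq0]
        exact h5.map _
      · rw [List.length_map, List.length_map]
        exact adv_bound q z n u.length v.length hz hzq' ε δ γ hε0 hδγ h6 h7
  have hsub : K ⊆ ((Finset.range m ∪ Finset.Ico (R - m) R ∪ Kg : Finset ℕ) : Set ℕ) := by
    intro k hk
    have h1 : k < R := (hlt k).1 hk.1
    simp only [Finset.coe_union, Set.mem_union, Finset.mem_coe, Finset.mem_range, Finset.mem_Ico,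
      hKg, Finset.mem_filter]
    by_cases h2 : k < m
    · exact Or.inl (Or.inl h2)
    · by_cases h3 : R - m ≤ k
      · exact Or.inl (Or.inr ⟨h3, h1⟩)
      · exact Or.inr ⟨⟨by omega, by omega⟩, hk⟩
  have hcard : K.ncard ≤ m + m + Kg.card := by
    refine (Set.ncard_le_ncard hsub (Finset.finite_toSet _)).trans ?_
    rw [Set.ncard_coe_finset]
    refine (Finset.card_union_le _ _).trans (Nat.add_le_add_right ?_ _)
    refine (Finset.card_union_le _ _).trans ?_
    rw [Finset.card_range, Nat.card_Ico]
    omega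
  have hcR : (K.ncard : ℝ) ≤ m + m + Kg.card := by exact_mod_cast hcard
  have hqR : (2 : ℝ) ≤ q := by exact_mod_cast hq
  have hmR : (m : ℝ) ≤ 6 * q := by rw [hm]; push_cast; linarith
  have hm0 : (0 : ℝ) ≤ m := Nat.cast_nonneg m
  have hε2 : 0 < ε ^ 2 := by positivity
  have hε21 : ε ^ 2 ≤ 1 := pow_le_one₀ hε0.le hε1.le
  refine hcR.trans ?_
  rw [le_div_iff₀ hε2] at hgood ⊢
  have h1 : (m : ℝ) * ε ^ 2 ≤ m * 1 := mul_le_mul_of_nonneg_left hε21 hm0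
  have h2 : (m : ℝ) * q ^ 2 ≤ 6 * q * q ^ 2 := mul_le_mul_of_nonneg_right hmR (by positivity)
  have h3 : (q : ℝ) ^ 3 ≤ q ^ 5 := pow_le_pow_right₀ (by linarith) (by norm_num)
  have h4 : (q : ℝ) ≤ q ^ 3 := by
    calc (q : ℝ) = q ^ 1 := (pow_one _).symm
      _ ≤ q ^ 3 := pow_le_pow_right₀ (by linarith) (by norm_num)
  have h5 : 6 * (q : ℝ) * q ^ 2 = 6 * q ^ 3 := by ring
  linarith
end

section
/- For every nonempty binary string S and every integer r ≥ 1, there exists a finite contiguous substring b of the infinite string A_r = (0^r 1^r)^∞ such that 3·LCS(S, b) − |S| − |b| ≥ −|S|/2. Consequently, adv(S, A_r) ≥ −1/2, where adv(S, A_r) denotes the supremum of adv(S, b') over all finite contiguous substrings b' of A_r. -/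
/-- The length of a longest common subsequence of `x` and `y`. -/
noncomputable def LCS {α : Type*} (x y : List α) : ℕ :=
  sSup {n | ∃ u : List α, u.Sublist x ∧ u.Sublist y ∧ u.length = n}

/-- The contiguous substring of the infinite alternating binary string `A_r = (0^r 1^r)^∞`
starting at (0-indexed) position `i` and having length `m`. -/
def altSeg (r i m : ℕ) : List Bool :=
  (List.range m).map (fun t => decide (((i + t) / r) % 2 = 1))

/-- Advantage of `a` over `b`: `(3·LCS(a,b) − |a| − |b|) / |a|`. -/
noncomputable def advR (a b : List Bool) : ℝ :=
  (3 * (LCS a b : ℝ) - a.length - b.length) / a.length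

/-- Advantage of `a` to the infinite alternating string `A_r`: the supremum of the
advantage of `a` over all finite contiguous substrings of `A_r`. -/
noncomputable def advInf (a : List Bool) (r : ℕ) : ℝ :=
  sSup {x : ℝ | ∃ i m : ℕ, x = advR a (altSeg r i m)}

theorem lcs_bdd (x y : List Bool) :
    BddAbove {n | ∃ u : List Bool, u.Sublist x ∧ u.Sublist y ∧ u.length = n} := by
  refine ⟨x.length, ?_⟩
  rintro n ⟨u, hx, _, rfl⟩
  exact hx.length_le

theorem le_lcs {x y u : List Bool} (hx : u.Sublist x) (hy : u.Sublist y) :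
    u.length ≤ LCS x y :=
  le_csSup (lcs_bdd x y) ⟨u, hx, hy, rfl⟩

theorem lcs_le (x y : List Bool) : LCS x y ≤ x.length := by
  unfold LCS
  refine csSup_le (Set.nonempty_of_mem (x := 0) ⟨[], by simp, by simp, rfl⟩) ?_
  rintro n ⟨u, hx, _, rfl⟩
  exact hx.length_le

theorem split_agree (S : List Bool) : ∀ T : List Bool, S.length = T.length →
    ∃ u v : List Bool, u.Sublist S ∧ u.Sublist T ∧ v.Sublist S ∧ v.Sublist (T.map not) ∧
      S.length ≤ u.length + v.length := by
  induction S with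
  | nil => intro T _; exact ⟨[], [], by simp⟩
  | cons a S ih =>
    intro T hT
    cases T with
    | nil => simp at hT
    | cons b T =>
      obtain ⟨u, v, h1, h2, h3, h4, h5⟩ := ih T (by simpa using hT)
      by_cases hab : a = b
      · subst hab
        refine ⟨a :: u, v, h1.cons_cons a, h2.cons_cons a, h3.cons a, ?_, ?_⟩
        · exact h4.cons _
        · simp only [List.length_cons]; omega
      · have hb : (!b) = a := by cases a <;> cases b <;> simp_all
        refine ⟨u, a :: v, h1.cons a, h2.cons b, h3.cons_cons a, ?_, ?_⟩
        · rw [List.map_cons, hb]; exact h4.cons_cons a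
        · simp only [List.length_cons]; omega

theorem altSeg_compl (r : ℕ) (hr : 1 ≤ r) (m : ℕ) :
    (altSeg r 0 m).map not = altSeg r r m := by
  unfold altSeg
  rw [List.map_map]
  apply List.map_congr_left
  intro t _
  have h : (r + t) / r = t / r + 1 := by
    rw [Nat.add_div_left t hr]
  simp only [Function.comp, h, Nat.zero_add]
  rw [← decide_not]
  apply decide_eq_decide.mpr
  omega

theorem altSeg_len (r i m : ℕ) : (altSeg r i m).length = m := by
  simp [altSeg]

theorem exists_seg (S : List Bool) (r : ℕ) (hr : 1 ≤ r) :
    ∃ i m : ℕ, -((S.length : ℝ) / 2) ≤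
        3 * (LCS S (altSeg r i m) : ℝ) - S.length - (altSeg r i m).length := by
  obtain ⟨u, v, h1, h2, h3, h4, h5⟩ :=
    split_agree S (altSeg r 0 S.length) (altSeg_len _ _ _).symm
  rw [altSeg_compl r hr] at h4
  have hu := le_lcs h1 h2
  have hv := le_lcs h3 h4
  have key : S.length ≤ 2 * LCS S (altSeg r 0 S.length) ∨
      S.length ≤ 2 * LCS S (altSeg r r S.length) := by omega
  rcases key with k | k
  · refine ⟨0, S.length, ?_⟩
    rw [altSeg_len]
    have : (S.length : ℝ) ≤ 2 * (LCS S (altSeg r 0 S.length) : ℝ) := by exact_mod_cast k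
    linarith
  · refine ⟨r, S.length, ?_⟩
    rw [altSeg_len]
    have : (S.length : ℝ) ≤ 2 * (LCS S (altSeg r r S.length) : ℝ) := by exact_mod_cast k
    linarith

theorem stmt8 (S : List Bool) (hS : S ≠ []) (r : ℕ) (hr : 1 ≤ r) :
    (∃ i m : ℕ,
      -((S.length : ℝ) / 2) ≤
        3 * (LCS S (altSeg r i m) : ℝ) - S.length - (altSeg r i m).length) ∧
    -(1 / 2 : ℝ) ≤ advInf S r := by
  refine ⟨exists_seg S r hr, ?_⟩
  have hpos : (0 : ℝ) < S.length := by exact_mod_cast List.length_pos_iff.mpr hS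
  obtain ⟨i, m, h⟩ := exists_seg S r hr
  have hle : -(1 / 2 : ℝ) ≤ advR S (altSeg r i m) := by
    unfold advR
    rw [le_div_iff₀ hpos]
    linarith
  refine hle.trans (le_csSup ⟨2, ?_⟩ ⟨i, m, rfl⟩)
  rintro x ⟨j, k, rfl⟩
  unfold advR
  rw [div_le_iff₀ hpos]
  have h1 : (LCS S (altSeg r j k) : ℝ) ≤ S.length := by exact_mod_cast lcs_le _ _
  have h2 : (0 : ℝ) ≤ (altSeg r j k).length := Nat.cast_nonneg _
  linarith
end

section
/- Let u and w be nonempty binary strings with count₀(u) ≤ count₁(w), and let A > 0 be a real such that 2A·(|u| + |w|) ≤ (1 − 3·bias(u))·|u| − (1 − bias(w))·|w|. Then |bias(w) − bias(u)| ≥ A/3. -/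
/-- The bias of a binary string: `(count₁(w) − count₀(w)) / |w|`. -/
noncomputable def bias (w : List Bool) : ℝ :=
  ((w.count true : ℝ) - (w.count false : ℝ)) / w.length

theorem stmt12 (u w : List Bool) (hu : u ≠ []) (hw : w ≠ [])
    (hcount : u.count false ≤ w.count true) (A : ℝ) (hA : 0 < A)
    (h : 2 * A * ((u.length : ℝ) + w.length) ≤
      (1 - 3 * bias u) * u.length - (1 - bias w) * w.length) :
    A / 3 ≤ |bias w - bias u| := by
  have hU : (0:ℝ) < u.length := by exact_mod_cast List.length_pos_iff.mpr hu
  have hW : (0:ℝ) < w.length := by exact_mod_cast List.length_pos_iff.mpr hw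
  have lu : (u.count true : ℝ) + u.count false = u.length := by
    exact_mod_cast List.count_true_add_count_false u
  have lw : (w.count true : ℝ) + w.count false = w.length := by
    exact_mod_cast List.count_true_add_count_false w
  have bu : bias u * u.length = (u.count true : ℝ) - u.count false := by
    unfold bias; field_simp
  have bw : bias w * w.length = (w.count true : ℝ) - w.count false := by
    unfold bias; field_simp
  have hc : (u.count false : ℝ) ≤ w.count true := by exact_mod_cast hcount
  have n1 : (0:ℝ) ≤ w.count true := by positivity
  have n2 : (0:ℝ) ≤ w.count false := by positivity
  generalize (u.length : ℝ) = U at *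
  generalize (w.length : ℝ) = W at *
  generalize bias u = p at *
  generalize bias w = q at *
  have q1 : 0 ≤ 1 - q := by
    by_contra! hh
    nlinarith [mul_pos_of_neg_of_neg hh (neg_neg_of_pos hW)]
  have q2 : 0 ≤ 1 + q := by
    by_contra! hh
    nlinarith [mul_pos_of_neg_of_neg hh (neg_neg_of_pos hW)]
  have h1 : U * (1 - p) ≤ W * (1 + q) := by linarith
  have h2 : A * (U + W) ≤ p * (W - U) + (q - p) * W := by linarith
  have hAU := mul_pos hA hU
  have hAW := mul_pos hA hW
  by_contra! hlt
  obtain ⟨ha, hb⟩ := abs_lt.mp hlt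
  have h3 : (q - p) * W ≤ A / 3 * W := mul_le_mul_of_nonneg_right hb.le hW.le
  rcases le_total U W with hUW | hUW
  · have h4 : 0 < (q - 3 * p) * U := by
      have := mul_le_mul_of_nonneg_left hUW q1
      linarith
    have h5 : 0 < q - 3 * p := pos_of_mul_pos_left h4 hU.le
    have h6 : p * (W - U) ≤ A / 6 * (W - U) :=
      mul_le_mul_of_nonneg_right (by linarith) (by linarith)
    linarith
  · have h4 : 0 ≤ (q + p) * U := by
      have := mul_le_mul_of_nonneg_left hUW q2
      linarith
    have h5 : 0 ≤ q + p := nonneg_of_mul_nonneg_left h4 hU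
    have h6 : -p * (U - W) ≤ A / 6 * (U - W) :=
      mul_le_mul_of_nonneg_right (by linarith) (by linarith)
    linarith
end

section
/- Let q ≥ 2 and 1 ≤ z ≤ q−1 be integers, let ε ∈ (0,1] be a real, let n ≥ 1 and r ≥ 1 be integers, and let v be a nonempty string over Fin q. Suppose there exists a common subsequence u of v and A^q_{r,n} such that (|v| − |u|) + 2z·(n − |u|) ≤ (1 − ε)·((2q−1)z − z²)/q · n. Then adv^{q,z}(v, A^q_{r,n}) ≥ ε/q, i.e., (2z+1)·LCS(v, A^q_{r,n}) − |v| − ((z + z²)/q)·n ≥ (ε/q)·|v|. -/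
theorem stmt15 (q z : ℕ) (hq : 2 ≤ q) (hz1 : 1 ≤ z) (hz2 : z ≤ q - 1)
    (ε : ℝ) (hε : ε ∈ Set.Ioc (0 : ℝ) 1) (n r : ℕ) (hn : 1 ≤ n) (hr : 1 ≤ r)
    (v : List (Fin q)) (hv : v ≠ [])
    (h : ∃ u : List (Fin q), u.Sublist v ∧ u.Sublist (bukhMaQ q r n) ∧
      ((v.length : ℝ) - u.length) + 2 * z * ((n : ℝ) - u.length) ≤
        (1 - ε) * ((2 * (q : ℝ) - 1) * z - (z : ℝ) ^ 2) / q * n) :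
    (ε / q) * v.length ≤
      (2 * (z : ℝ) + 1) * (LCS v (bukhMaQ q r n) : ℝ) - v.length -
        (((z : ℝ) + (z : ℝ) ^ 2) / q) * n := by
  obtain ⟨u, huv, hua, hu⟩ := h
  obtain ⟨hε0, hε1⟩ := hε
  have hq0 : 0 < q := by omega
  have hlen : (bukhMaQ q r n).length = n := by simp [bukhMaQ, hq0]
  have hUn : u.length ≤ n := hlen ▸ hua.length_le
  have hL : u.length ≤ LCS v (bukhMaQ q r n) := by
    unfold LCS
    apply le_csSup
    · refine ⟨v.length, ?_⟩
      rintro m ⟨w, hw, -, rfl⟩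
      exact hw.length_le
    · exact ⟨u, huv, hua, rfl⟩
  have hUn' : (u.length : ℝ) ≤ n := by exact_mod_cast hUn
  have hL' : (u.length : ℝ) ≤ (LCS v (bukhMaQ q r n) : ℝ) := by exact_mod_cast hL
  have hz1' : (1 : ℝ) ≤ z := by exact_mod_cast hz1
  have hq' : (2 : ℝ) ≤ q := by exact_mod_cast hq
  have hzq : (z : ℝ) + 1 ≤ q := by
    have : z + 1 ≤ q := by omega
    exact_mod_cast this
  have hn' : (1 : ℝ) ≤ n := by exact_mod_cast hn
  generalize (LCS v (bukhMaQ q r n) : ℝ) = L at *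
  generalize (u.length : ℝ) = U at *
  generalize (v.length : ℝ) = V at *
  generalize (n : ℝ) = N at *
  generalize (q : ℝ) = Q at *
  generalize (z : ℝ) = Z at *
  have hQ : 0 < Q := by linarith
  obtain ⟨C, hC⟩ : ∃ C, C = ((2 * Q - 1) * Z - Z ^ 2) / Q := ⟨_, rfl⟩
  have hD : (Z + Z ^ 2) / Q = 2 * Z - C := by
    rw [hC]; field_simp; ring
  have hC1 : 1 ≤ C := by
    rw [hC, le_div_iff₀ hQ]
    nlinarith [mul_nonneg (sub_nonneg.2 hz1') (sub_nonneg.2 hzq)]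
  rw [mul_div_assoc, ← hC] at hu
  rw [hD]
  have h1 : ε * C * N ≤ (2 * Z + 1) * L - V - (2 * Z - C) * N := by
    nlinarith [mul_le_mul_of_nonneg_left hL' (by linarith : (0:ℝ) ≤ 2 * Z + 1)]
  have hV : V ≤ Q * (C * N) := by
    have a : 0 ≤ Z * (N - U) := mul_nonneg (by linarith) (by linarith)
    have b : 0 ≤ ε * (C * N) := by positivity
    have c : N ≤ C * N := by nlinarith
    have d : 0 ≤ (Q - 2) * (C * N) := mul_nonneg (by linarith) (by positivity)
    nlinarith
  have h2 : ε / Q * V ≤ ε * C * N := by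
    rw [div_mul_eq_mul_div, div_le_iff₀ hQ]
    nlinarith
  linarith
end

section
/- Let q ≥ 2 be an integer and let (p₁, …, p_q) and (f₁, …, f_q) be vectors of positive reals, each summing to 1, satisfying f₁p₁ ≥ f₂p₂ ≥ ⋯ ≥ f_q p_q. Let z be an integer with 1 ≤ z < q and set w = ⌊z/2⌋ + 1. Then: (1) if z is even, ((3z+2)/2)·f_w p_w + (2z+1)·∑_{j=w+1}^{q} f_j p_j ≤ 1; and (2) if z is odd, ((z+1)/2)·f_w p_w + (2z+1)·∑_{j=w+1}^{q} f_j p_j ≤ 1. -/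
theorem core_ineq (z t y r D : ℝ) (hz : 1 ≤ z) (hr : r = 1 - z * t) (ht : 0 ≤ t)
    (hy : 0 ≤ y) (hyt : y ≤ t) (hD : 0 ≤ D) (hyr : y ≤ r + D) :
    (z * t) ^ 2 + (2 * z + 1) * (y * r - D * t) ≤ 1 := by
  have e : z * t = 1 - r := by linarith
  have h2 : (2 * z + 1) * (y * r - D * t) ≤ 2 * r - r ^ 2 := by
    rcases lt_or_ge r 0 with h | h
    · have h1 : y * r - D * t ≤ r * t := by nlinarith
      have h3 : (2 * z + 1) * (y * r - D * t) ≤ (2 * z + 1) * (r * t) :=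
        mul_le_mul_of_nonneg_left h1 (by linarith)
      have h4 : (2 * z + 1) * (r * t) = r * (2 * (1 - r) + t) := by rw [← e]; ring
      nlinarith
    · rcases le_total r t with h' | h'
      · have h1 : y * r - D * t ≤ r * r := by nlinarith
        have h3 : (2 * z + 1) * (y * r - D * t) ≤ (2 * z + 1) * (r * r) :=
          mul_le_mul_of_nonneg_left h1 (by linarith)
        have h5 : z * r ≤ 1 - r := by rw [← e]; exact mul_le_mul_of_nonneg_left h' (by linarith)
        nlinarith
      · have h1 : y * r - D * t ≤ t * r := by nlinarith
        have h3 : (2 * z + 1) * (y * r - D * t) ≤ (2 * z + 1) * (t * r) :=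
          mul_le_mul_of_nonneg_left h1 (by linarith)
        have h4 : (2 * z + 1) * (t * r) = r * (2 * (1 - r) + t) := by rw [← e]; ring
        nlinarith
  rw [e]; nlinarith

theorem core_sum (q z w : ℕ) (x : ℕ → ℝ) (hx : ∀ i, 0 ≤ x i)
    (hm : ∀ i j : ℕ, 1 ≤ i → i ≤ j → j ≤ q → x j ≤ x i)
    (hs : ∑ i ∈ Finset.Ioc 0 q, x i ≤ 1) (hz1 : 1 ≤ z) (hz2 : z < q) (hw1 : 1 ≤ w) (hw : w ≤ z) (c : ℝ)
    (hc : c + (2 * (z : ℝ) + 1) * ((z : ℝ) - w) = (z : ℝ) ^ 2) :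
    c * (x w) ^ 2 + (2 * (z : ℝ) + 1) * ∑ j ∈ Finset.Ioc w q, (x j) ^ 2 ≤ 1 := by
  rw [← Finset.sum_Ioc_consecutive _ hw hz2.le]
  rw [← Finset.sum_Ioc_consecutive _ (Nat.zero_le w) (hw.trans hz2.le),
    ← Finset.sum_Ioc_consecutive _ hw hz2.le] at hs
  set t := x w
  set y := x (z + 1)
  set P := ∑ i ∈ Finset.Ioc w z, x i with hP
  set R := ∑ i ∈ Finset.Ioc z q, x i with hR
  have h1 : (w : ℝ) * t ≤ ∑ i ∈ Finset.Ioc 0 w, x i := by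
    have := Finset.card_nsmul_le_sum (Finset.Ioc 0 w) x t (fun i hi => by
      rw [Finset.mem_Ioc] at hi
      exact hm i w hi.1 hi.2 (by omega))
    simpa using this
  have h2 : P ≤ ((z : ℝ) - w) * t := by
    have := Finset.sum_le_card_nsmul (Finset.Ioc w z) x t (fun i hi => by
      rw [Finset.mem_Ioc] at hi
      exact hm w i hw1 hi.1.le (by omega))
    simpa [Nat.cast_sub hw] using this
  have h3 : ∑ i ∈ Finset.Ioc w z, (x i) ^ 2 ≤ P * (t + y) - ((z : ℝ) - w) * (t * y) := by
    have : ∑ i ∈ Finset.Ioc w z, (x i) ^ 2 ≤ ∑ i ∈ Finset.Ioc w z, (x i * (t + y) - t * y) := by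
      apply Finset.sum_le_sum
      intro i hi
      rw [Finset.mem_Ioc] at hi
      have a1 : x i ≤ t := hm w i hw1 hi.1.le (by omega)
      have a2 : y ≤ x i := hm i (z + 1) (by omega) (by omega) (by omega)
      nlinarith [mul_nonneg (sub_nonneg.2 a1) (sub_nonneg.2 a2)]
    rw [Finset.sum_sub_distrib, ← Finset.sum_mul] at this
    simpa [Nat.cast_sub hw] using this
  have h4 : ∑ i ∈ Finset.Ioc z q, (x i) ^ 2 ≤ R * y := by
    rw [hR, Finset.sum_mul]
    apply Finset.sum_le_sum
    intro i hi
    rw [Finset.mem_Ioc] at hi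
    have a2 : x i ≤ y := hm (z + 1) i (by omega) (by omega) (by omega)
    nlinarith [hx i]
  have h5 : y ≤ R := Finset.single_le_sum (f := x) (fun i _ => hx i)
    (Finset.mem_Ioc.2 ⟨by omega, by omega⟩)
  have hyt : y ≤ t := hm w (z + 1) hw1 (by omega) (by omega)
  have hy : 0 ≤ y := hx _
  have key := core_ineq z t y (1 - z * t) (((z : ℝ) - w) * t - P) (by exact_mod_cast hz1) rfl
    (hx _) hy hyt (by linarith) (by linarith)
  have hRy : R * y ≤ (1 - w * t - P) * y := mul_le_mul_of_nonneg_right (by linarith) hy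
  have h6 : ∑ i ∈ Finset.Ioc w z, (x i) ^ 2 + ∑ i ∈ Finset.Ioc z q, (x i) ^ 2 ≤
      ((z : ℝ) - w) * t ^ 2 + (y * (1 - z * t) - (((z : ℝ) - w) * t - P) * t) := by
    linarith
  have h7 := mul_le_mul_of_nonneg_left h6 (by positivity : (0:ℝ) ≤ 2 * (z : ℝ) + 1)
  have h8 : c * t ^ 2 = (z : ℝ) ^ 2 * t ^ 2 - (2 * (z : ℝ) + 1) * ((z : ℝ) - w) * t ^ 2 := by
    rw [← hc]; ring
  rw [h8]
  linarith

theorem stmt16 (q : ℕ) (hq : 2 ≤ q) (f p : ℕ → ℝ)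
    (hf : ∀ i ∈ Finset.Icc 1 q, 0 < f i) (hp : ∀ i ∈ Finset.Icc 1 q, 0 < p i)
    (hfs : ∑ i ∈ Finset.Icc 1 q, f i = 1) (hps : ∑ i ∈ Finset.Icc 1 q, p i = 1)
    (hmono : ∀ i j : ℕ, 1 ≤ i → i ≤ j → j ≤ q → f j * p j ≤ f i * p i)
    (z : ℕ) (hz1 : 1 ≤ z) (hz2 : z < q) :
    (Even z →
      ((3 * (z : ℝ) + 2) / 2) * (f (z / 2 + 1) * p (z / 2 + 1)) +
        (2 * (z : ℝ) + 1) * ∑ j ∈ Finset.Icc (z / 2 + 2) q, f j * p j ≤ 1) ∧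
    (Odd z →
      (((z : ℝ) + 1) / 2) * (f (z / 2 + 1) * p (z / 2 + 1)) +
        (2 * (z : ℝ) + 1) * ∑ j ∈ Finset.Icc (z / 2 + 2) q, f j * p j ≤ 1) := by
  have hsq : ∀ i ∈ Finset.Icc 1 q, (√(f i * p i)) ^ 2 = f i * p i := fun i hi =>
    Real.sq_sqrt (mul_pos (hf i hi) (hp i hi)).le
  have hs : ∑ i ∈ Finset.Ioc 0 q, √(f i * p i) ≤ 1 := by
    have e : Finset.Ioc 0 q = Finset.Icc 1 q := by ext; simp; omega
    rw [e]
    calc ∑ i ∈ Finset.Icc 1 q, √(f i * p i) ≤ ∑ i ∈ Finset.Icc 1 q, (f i + p i) / 2 := by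
          apply Finset.sum_le_sum
          intro i hi
          apply Real.sqrt_le_iff.2
          have := hf i hi
          have := hp i hi
          exact ⟨by positivity, by nlinarith [sq_nonneg (f i - p i)]⟩
      _ = 1 := by rw [← Finset.sum_div, Finset.sum_add_distrib, hfs, hps]; norm_num
  have main : ∀ c : ℝ, c + (2 * (z : ℝ) + 1) * ((z : ℝ) - (z / 2 + 1 : ℕ)) = (z : ℝ) ^ 2 →
      c * (f (z / 2 + 1) * p (z / 2 + 1)) +
        (2 * (z : ℝ) + 1) * ∑ j ∈ Finset.Icc (z / 2 + 2) q, f j * p j ≤ 1 := by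
    intro c hc
    have := core_sum q z (z / 2 + 1) (fun i => √(f i * p i)) (fun i => Real.sqrt_nonneg _)
      (fun i j h1 h2 h3 => Real.sqrt_le_sqrt (hmono i j h1 h2 h3)) hs hz1 hz2 (by omega) (by omega)
      c hc
    have e : Finset.Ioc (z / 2 + 1) q = Finset.Icc (z / 2 + 2) q := by ext; simp; omega
    rw [e] at this
    rw [hsq _ (Finset.mem_Icc.2 ⟨by omega, by omega⟩),
      Finset.sum_congr rfl (fun i hi => hsq i (by
        rw [Finset.mem_Icc] at hi ⊢
        omega))] at this
    exact this
  constructor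
  · rintro ⟨k, rfl⟩
    apply main
    have : (k + k) / 2 = k := by omega
    rw [this]; push_cast; ring
  · rintro ⟨k, rfl⟩
    apply main
    have : (2 * k + 1) / 2 = k := by omega
    rw [this]; push_cast; ring
end

section
/- Let q ≥ 2 be an integer, let f₁, …, f_q and p₁, …, p_q be positive reals with ∑_{i=1}^{q} fᵢ = F and ∑_{i=1}^{q} pᵢ = P, satisfying f₁p₁ ≥ f₂p₂ ≥ ⋯ ≥ f_q p_q and f₁p₁ ≤ m for some real m > 0. Then ∑_{i=1}^{q} fᵢpᵢ ≤ f_max(F, P, m), where f_max(F,P,m) is defined piecewise by: f_max = FP if FP ≤ m; f_max = u·m + (√(FP) − u·√m)² if FP/(u+1)² ≤ m < FP/u² for an integer u ∈ {1, …, q−1}; and f_max = m·q if m < FP/q². -/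
theorem stmt18 (q : ℕ) (hq : 2 ≤ q) (f p : ℕ → ℝ) (F P m : ℝ) (hm : 0 < m)
    (hf : ∀ i ∈ Finset.Icc 1 q, 0 < f i) (hp : ∀ i ∈ Finset.Icc 1 q, 0 < p i)
    (hF : ∑ i ∈ Finset.Icc 1 q, f i = F) (hP : ∑ i ∈ Finset.Icc 1 q, p i = P)
    (hmono : ∀ i j : ℕ, 1 ≤ i → i ≤ j → j ≤ q → f j * p j ≤ f i * p i)
    (hm1 : f 1 * p 1 ≤ m) :
    (F * P ≤ m → ∑ i ∈ Finset.Icc 1 q, f i * p i ≤ F * P) ∧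
    (∀ u : ℕ, 1 ≤ u → u ≤ q - 1 →
      F * P / ((u : ℝ) + 1) ^ 2 ≤ m → m < F * P / (u : ℝ) ^ 2 →
      ∑ i ∈ Finset.Icc 1 q, f i * p i ≤
        u * m + (Real.sqrt (F * P) - u * Real.sqrt m) ^ 2) ∧
    (m < F * P / (q : ℝ) ^ 2 → ∑ i ∈ Finset.Icc 1 q, f i * p i ≤ m * q) := by
  have hFi : ∀ i ∈ Finset.Icc 1 q, f i * p i ≤ m := by
    intro i hi
    rw [Finset.mem_Icc] at hi
    exact (hmono 1 i le_rfl hi.1 hi.2).trans hm1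
  have hFpos : 0 ≤ F := hF ▸ Finset.sum_nonneg (fun i hi => (hf i hi).le)
  have hPpos : 0 ≤ P := hP ▸ Finset.sum_nonneg (fun i hi => (hp i hi).le)
  refine ⟨fun _ => ?_, ?_, fun _ => ?_⟩
  · rw [← hF, Finset.sum_mul]
    refine Finset.sum_le_sum fun i hi => ?_
    refine mul_le_mul_of_nonneg_left ?_ (hf i hi).le
    rw [← hP]
    exact Finset.single_le_sum (f := p) (fun j hj => (hp j hj).le) hi
  · intro u hu1 huq h1 h2
    have hu0 : (0 : ℝ) < u := by exact_mod_cast hu1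
    have huq' : u + 1 ≤ q := by omega
    obtain ⟨x, hx⟩ : ∃ x : ℕ → ℝ, x = fun i => Real.sqrt (f i * p i) := ⟨_, rfl⟩
    have hx0 : ∀ i, 0 ≤ x i := fun i => by rw [hx]; exact Real.sqrt_nonneg _
    have hxsq : ∀ i ∈ Finset.Icc 1 q, f i * p i = x i ^ 2 := fun i hi => by
      rw [hx]; exact (Real.sq_sqrt (mul_pos (hf i hi) (hp i hi)).le).symm
    have hxmono : ∀ i j : ℕ, 1 ≤ i → i ≤ j → j ≤ q → x j ≤ x i := fun i j a b c => by
      rw [hx]; exact Real.sqrt_le_sqrt (hmono i j a b c)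
    have hxs : ∀ i ∈ Finset.Icc 1 q, x i ≤ Real.sqrt m := fun i hi => by
      rw [hx]; exact Real.sqrt_le_sqrt (hFi i hi)
    have hCS : ∑ i ∈ Finset.Icc 1 q, x i ≤ Real.sqrt (F * P) := by
      apply Real.le_sqrt_of_sq_le
      rw [← hF, ← hP]
      exact Finset.sum_sq_le_sum_mul_sum_of_sq_le_mul _ (fun i hi => (hf i hi).le)
        (fun i hi => (hp i hi).le) (fun i hi => (hxsq i hi).ge)
    have hsm : Real.sqrt m ^ 2 = m := Real.sq_sqrt hm.le
    have hs0 := Real.sqrt_nonneg m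
    have hSle : Real.sqrt (F * P) ≤ (u + 1) * Real.sqrt m := by
      apply Real.sqrt_le_iff.2
      refine ⟨by positivity, ?_⟩
      rw [mul_pow, hsm]
      rw [div_le_iff₀ (by positivity)] at h1
      linarith
    have hSge : u * Real.sqrt m ≤ Real.sqrt (F * P) := by
      apply Real.le_sqrt_of_sq_le
      rw [mul_pow, hsm]
      rw [lt_div_iff₀ (by positivity)] at h2
      linarith
    rw [Finset.sum_congr rfl hxsq]
    generalize Real.sqrt (F * P) = S at *
    nth_rewrite 1 [← hsm]
    generalize Real.sqrt m = s at *
    obtain ⟨r, hr⟩ : ∃ r, r = S - u * s := ⟨_, rfl⟩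
    obtain ⟨K, hK⟩ : ∃ K, K = r + x (u + 1) := ⟨_, rfl⟩
    have hr0 : 0 ≤ r := by linarith
    have hrs : r ≤ s := by linarith
    have hK0 : 0 ≤ K := by linarith [hx0 (u + 1)]
    let g : ℕ → ℝ := fun i => if i ≤ u then s ^ 2 - s * K else if i = u + 1 then r ^ 2 - r * K else 0
    have hg : ∑ i ∈ Finset.Icc 1 q, g i = u * (s ^ 2 - s * K) + (r ^ 2 - r * K) := by
      rw [← Finset.sum_subset (Finset.Icc_subset_Icc_right huq' : Finset.Icc 1 (u + 1) ⊆ _)]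
      · rw [Finset.sum_Icc_succ_top (by omega)]
        rw [Finset.sum_congr rfl (g := fun _ => s ^ 2 - s * K)]
        · simp [g]
          ring
        · intro i hi
          simp [g, (Finset.mem_Icc.1 hi).2]
      · intro i hi hi'
        simp only [Finset.mem_Icc] at hi hi'
        simp only [g]
        rw [if_neg (by omega), if_neg (by omega)]
    have hterm : ∀ i ∈ Finset.Icc 1 q, x i ^ 2 ≤ K * x i + g i := by
      intro i hi
      have h3 := hxs i hi
      have h4 := hx0 i
      rw [Finset.mem_Icc] at hi
      simp only [g]
      split_ifs with ha hb
      · have h5 := hxmono i (u + 1) hi.1 (by omega) huq'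
        have : 0 ≤ (s - x i) * (s + x i - K) := mul_nonneg (by linarith) (by linarith)
        nlinarith
      · subst hb
        rw [hK]
        apply le_of_eq
        ring
      · have h5 := hxmono (u + 1) i (by omega) (by omega) hi.2
        have : x i * x i ≤ K * x i := mul_le_mul_of_nonneg_right (by linarith) h4
        nlinarith
    have hsum := Finset.sum_le_sum hterm
    rw [Finset.sum_add_distrib, hg, ← Finset.mul_sum] at hsum
    have h6 := mul_le_mul_of_nonneg_left hCS hK0
    rw [← hr]
    have h7 : K * S = K * (r + u * s) := by rw [hr]; ring
    nlinarith
  · have := Finset.sum_le_sum hFi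
    simp at this
    linarith
end
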